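/- arXiv:1207.3007 — 6 statements merged into one kernel-verified Lean document; each statement's English description precedes it below -/
import Mathlib

section
/- Let r ≥ 1, let n ∈ N_r(F), and let M′ ⊆ M be two O-lattices in F^r such that n·M = M and n·M′ = M′. Then the quotient M/M′ is a finite-dimensional k-vector space, and the k-linear automorphism of M/M′ induced by multiplication by n has determinant 1 (it is unipotent). -/
/-- `k ⊆ k[[ϖ]] ⊆ k((ϖ))` is a tower of scalar actions. -/
instance LaurentSeries.isScalarTower (k : Type) [Field k] :
    IsScalarTower k (PowerSeries k) (LaurentSeries k) := by
  constructor
  intro x p f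
  show (HahnSeries.ofPowerSeries ℤ k (x • p)) * f = x • ((HahnSeries.ofPowerSeries ℤ k p) * f)
  rw [PowerSeries.smul_eq_C_mul, map_mul, HahnSeries.ofPowerSeries_C,
    ← HahnSeries.C_mul_eq_smul, mul_assoc]

/-!
The quotient `M / M'` is finitely generated over `O` and, as `M'` spans `F^r`, is killed by a power
of `ϖ`; it is therefore a finite module over the finite-dimensional algebra `O / (ϖ^m)`. Since
`n - 1` is nilpotent, so is `φ - 1` for the induced endomorphism `φ` of the subquotient `M / M'`.
Hence `1 - φ` has characteristic polynomial `X^d`, whose value at `1` is `det φ`.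
-/

section Finiteness

section ClearingDenominators

variable {R : Type*} [CommSemiring R] (S : Submonoid R) {V : Type*} [AddCommMonoid V] [Module R V]

theorem exists_smul_mem_of_fg {M P : Submodule R V} (hM : M.FG) (h : ∀ x ∈ M, ∃ s ∈ S, s • x ∈ P) :
    ∃ s ∈ S, ∀ x ∈ M, s • x ∈ P := by
  induction M, hM using Submodule.fg_induction with
  | singleton x =>
    obtain ⟨s, hs, hsx⟩ := h x (Submodule.mem_span_singleton_self x)
    refine ⟨s, hs, fun y hy ↦ ?_⟩
    obtain ⟨a, rfl⟩ := Submodule.mem_span_singleton.mp hy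
    exact smul_comm s a x ▸ P.smul_mem a hsx
  | sup M₁ M₂ _ _ ih₁ ih₂ =>
    obtain ⟨s, hs, hsM⟩ := ih₁ fun x hx ↦ h x (Submodule.mem_sup_left hx)
    obtain ⟨t, ht, htM⟩ := ih₂ fun x hx ↦ h x (Submodule.mem_sup_right hx)
    refine ⟨s * t, S.mul_mem hs ht, fun x hx ↦ ?_⟩
    obtain ⟨y, hy, z, hz, rfl⟩ := Submodule.mem_sup.mp hx
    rw [smul_add]
    refine P.add_mem ?_ ?_
    · rw [mul_comm, mul_smul]
      exact P.smul_mem t (hsM y hy)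
    · rw [mul_smul]
      exact P.smul_mem s (htM z hz)

theorem exists_smul_mem_of_span_eq_top (K : Type*) [CommSemiring K] [Algebra R K]
    [IsLocalization S K] [Module K V] [IsScalarTower R K V] {P : Submodule R V}
    (hP : Submodule.span K (P : Set V) = ⊤) (x : V) : ∃ s ∈ S, s • x ∈ P := by
  obtain ⟨s, hs⟩ := multiple_mem_span_of_mem_localization_span S K (P : Set V) x (hP ▸ trivial)
  exact ⟨s, s.2, by rwa [Submodule.span_eq] at hs⟩

end ClearingDenominators

variable {k R : Type*} [CommRing k] [CommRing R] [Algebra k R]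

theorem finite_of_isTorsionBySet {N : Type*} [AddCommGroup N] [Module R N] [Module k N]
    [IsScalarTower k R N] [Module.Finite R N] (I : Ideal R) [Module.Finite k (R ⧸ I)]
    (hI : Module.IsTorsionBySet R N I) : Module.Finite k N :=
  letI := hI.module
  haveI : IsScalarTower R (R ⧸ I) N := hI.isScalarTower
  haveI : IsScalarTower k (R ⧸ I) N := hI.isScalarTower
  haveI : Module.Finite (R ⧸ I) N := Module.Finite.of_restrictScalars_finite R (R ⧸ I) N
  Module.Finite.trans (R ⧸ I) N

theorem finite_lattice_quotient {S : Submonoid R}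
    (hS : ∀ s ∈ S, Module.Finite k (R ⧸ Ideal.span {s}))
    (K : Type*) [CommRing K] [Algebra R K] [IsLocalization S K]
    {V : Type*} [AddCommGroup V] [Module k V] [Module R V] [Module K V]
    [IsScalarTower k R V] [IsScalarTower R K V]
    {M M' : Submodule R V} (hM : M.FG) (hM' : Submodule.span K (M' : Set V) = ⊤)
    {Q : Type*} [AddCommGroup Q] [Module k Q] {q : M.restrictScalars k →ₗ[k] Q}
    (hq : Function.Surjective q)
    (hker : (M'.restrictScalars k).comap (M.restrictScalars k).subtype ≤ LinearMap.ker q) :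
    Module.Finite k Q := by
  obtain ⟨s, hs, hsM⟩ := exists_smul_mem_of_fg S hM
    fun x _ ↦ exists_smul_mem_of_span_eq_top S K hM' x
  let P : Submodule R M := M'.comap M.subtype
  have htorsion : Module.IsTorsionBySet R (M ⧸ P) (Ideal.span {s}) :=
    (Module.isTorsionBySet_span_singleton_iff s).mpr <|
      (Module.isTorsionBy_quotient_iff P s).mpr fun x ↦ hsM x x.2
  have := hS s hs
  have := Module.Finite.of_fg hM
  have : Module.Finite k (M ⧸ P) := finite_of_isTorsionBySet (Ideal.span {s}) htorsion
  let qbar : (M ⧸ P.restrictScalars k) →ₗ[k] Q := (P.restrictScalars k).liftQ q hker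
  have hqbar : Function.Surjective qbar := fun z ↦
    let ⟨x, hx⟩ := hq z
    ⟨Submodule.Quotient.mk x, hx⟩
  exact Module.Finite.of_surjective
    (qbar ∘ₗ (Submodule.Quotient.restrictScalarsEquiv k P).symm.toLinearMap)
    (hqbar.comp (LinearEquiv.surjective _))

theorem finite_powerSeries_quotient_of_mem_powers_X (s : PowerSeries k)
    (hs : s ∈ Submonoid.powers (PowerSeries.X : PowerSeries k)) :
    Module.Finite k (PowerSeries k ⧸ Ideal.span {s}) := by
  obtain ⟨m, rfl⟩ := hs
  let π := (Ideal.Quotient.mkₐ k (Ideal.span {(PowerSeries.X : PowerSeries k) ^ m})).comp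
    (Polynomial.coeToPowerSeries.algHom k)
  refine Module.Finite.of_surjective (π.toLinearMap.domRestrict (Polynomial.degreeLT k m))
    fun z ↦ ?_
  obtain ⟨p, rfl⟩ := Ideal.Quotient.mk_surjective z
  refine ⟨⟨p.trunc m, Polynomial.mem_degreeLT.mpr (p.degree_trunc_lt m)⟩, ?_⟩
  refine (Ideal.Quotient.mk_eq_mk_iff_sub_mem _ _).mpr (Ideal.mem_span_singleton.mpr ?_)
  rw [← dvd_neg, neg_sub]
  exact ⟨_, sub_eq_of_eq_add (p.eq_X_pow_mul_shift_add_trunc m)⟩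

end Finiteness

section Unipotent

theorem det_eq_one_of_isNilpotent_sub_one {k Q : Type*} [CommRing k] [IsDomain k]
    [AddCommGroup Q] [Module k Q] [Module.Finite k Q] [Module.Free k Q] {φ : Module.End k Q}
    (hφ : IsNilpotent (φ - 1)) : LinearMap.det φ = 1 := by
  have hnil : IsNilpotent (1 - φ) := by simpa only [neg_sub] using hφ.neg
  calc LinearMap.det φ = (1 - φ).charpoly.eval 1 := by simp [LinearMap.eval_charpoly]
    _ = 1 := by simp [hnil.charpoly_eq_X_pow_finrank]

theorem isNilpotent_of_surjective_of_comp_eq {k N Q : Type*} [Semiring k] [AddCommMonoid N]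
    [Module k N] [AddCommMonoid Q] [Module k Q] {q : N →ₗ[k] Q} (hq : Function.Surjective q)
    {g : Module.End k N} {φ : Module.End k Q} (h : φ ∘ₗ q = q ∘ₗ g) (hg : IsNilpotent g) :
    IsNilpotent φ := by
  obtain ⟨m, hm⟩ := hg
  refine ⟨m, (LinearMap.cancel_right hq).mp ?_⟩
  rw [Module.End.commute_pow_left_of_commute h, hm, LinearMap.comp_zero, LinearMap.zero_comp]

theorem isNilpotent_sub_one_of_subquotient {k V Q : Type*} [Ring k] [AddCommGroup V]
    [Module k V] [AddCommGroup Q] [Module k Q] {f : Module.End k V} (hf : IsNilpotent (f - 1))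
    {N : Submodule k V} (hN : ∀ x ∈ N, f x ∈ N) {q : N →ₗ[k] Q} (hq : Function.Surjective q)
    {φ : Module.End k Q} (hφ : φ ∘ₗ q = q ∘ₗ f.restrict hN) : IsNilpotent (φ - 1) := by
  have hsub : ∀ x ∈ N, (f - 1) x ∈ N := fun x hx ↦ N.sub_mem (hN x hx) hx
  refine isNilpotent_of_surjective_of_comp_eq hq (g := (f - 1).restrict hsub) ?_
    (Module.End.isNilpotent.restrict hsub hf)
  ext x
  have hx : φ (q x) = q (f.restrict hN x) := LinearMap.congr_fun hφ x
  change φ (q x) - q x = q (f.restrict hN x - x)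
  rw [hx, map_sub]

theorem isNilpotent_sub_one_of_isUpperTriangular {ι R : Type*} [Fintype ι] [LinearOrder ι]
    [CommRing R] {n : Matrix ι ι R} (hn : n.IsUpperTriangular) (hdiag : ∀ i, n i i = 1) :
    IsNilpotent (n - 1) := by
  refine ⟨Fintype.card ι, ?_⟩
  simpa [Matrix.charpoly_of_isUpperTriangular n hn, hdiag] using n.aeval_self_charpoly

theorem isNilpotent_mulVecLin_sub_one {ι R : Type*} [Fintype ι] [DecidableEq ι] [CommRing R]
    {n : Matrix ι ι R} (hn : IsNilpotent (n - 1)) : IsNilpotent (n.mulVecLin - 1) := by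
  have h := hn.map (Matrix.toLinAlgEquiv' (R := R) (n := ι))
  rwa [map_sub, map_one] at h

theorem isNilpotent_restrictScalars_sub_one (k : Type*) {R V : Type*} [Ring k] [Ring R]
    [AddCommGroup V] [Module k V] [Module R V] [LinearMap.CompatibleSMul V V k R]
    {f : Module.End R V} (hf : IsNilpotent (f - 1)) :
    IsNilpotent (f.restrictScalars k - 1 : Module.End k V) := by
  obtain ⟨m, hm⟩ := hf
  refine ⟨m, LinearMap.ext fun x ↦ ?_⟩
  have hx : ((f - 1) ^ m) x = 0 := LinearMap.congr_fun hm x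
  rwa [Module.End.pow_apply] at hx ⊢

end Unipotent

theorem unipotent_stabilizer_det_one_on_lattice_quotient_general
    {k R K V Q : Type*} [Field k] [CommRing R] [Algebra k R] {S : Submonoid R}
    (hS : ∀ s ∈ S, FiniteDimensional k (R ⧸ Ideal.span {s}))
    [CommRing K] [Algebra R K] [IsLocalization S K]
    [AddCommGroup V] [Module k V] [Module R V] [Module K V]
    [IsScalarTower k R V] [IsScalarTower R K V]
    {f : Module.End k V} (hf : IsNilpotent (f - 1))
    {M M' : Submodule R V} (hM : M.FG) (hM' : Submodule.span K (M' : Set V) = ⊤)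
    (hfM : ∀ x ∈ M, f x ∈ M)
    [AddCommGroup Q] [Module k Q] {q : M.restrictScalars k →ₗ[k] Q}
    (hq : Function.Surjective q)
    (hker : LinearMap.ker q = (M'.restrictScalars k).comap (M.restrictScalars k).subtype) :
    FiniteDimensional k Q ∧
      ∀ φ : Module.End k Q, φ ∘ₗ q = q ∘ₗ f.restrict hfM → LinearMap.det φ = 1 := by
  have hfin : FiniteDimensional k Q := finite_lattice_quotient hS K hM hM' hq hker.ge
  exact ⟨hfin, fun φ hφ ↦ det_eq_one_of_isNilpotent_sub_one
    (isNilpotent_sub_one_of_subquotient hf hfM hq hφ)⟩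

/-- if `n` is upper triangular unipotent over `F = k((ϖ))` and `M' ⊆ M` are
`O`-lattices in `F^r` with `n·M = M` and `n·M' = M'`, then the quotient `M/M'` (here
represented by any `k`-module `Q` that is a quotient of `M` with kernel `M'`) is a
finite-dimensional `k`-vector space, and the `k`-linear endomorphism of `M/M'` induced by
multiplication by `n` has determinant `1`. -/
theorem unipotent_stabilizer_det_one_on_lattice_quotient
    (k : Type) [Field k] (r : ℕ) (hr : 1 ≤ r)
    (n : Matrix (Fin r) (Fin r) (LaurentSeries k))
    (hdiag : ∀ i, n i i = 1)
    (hlow : ∀ i j : Fin r, j < i → n i j = 0)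
    (M M' : Submodule (PowerSeries k) (Fin r → LaurentSeries k))
    (hMfg : M.FG) (hM'fg : M'.FG)
    (hMspan : Submodule.span (LaurentSeries k)
      (M : Set (Fin r → LaurentSeries k)) = ⊤)
    (hM'span : Submodule.span (LaurentSeries k)
      (M' : Set (Fin r → LaurentSeries k)) = ⊤)
    (hle : M' ≤ M)
    (hnM : M.map ((Matrix.mulVecLin n).restrictScalars (PowerSeries k)) = M)
    (hnM' : M'.map ((Matrix.mulVecLin n).restrictScalars (PowerSeries k)) = M')
    -- `Q` is the quotient `M/M'` as a `k`-vector space :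
    (Q : Type) [AddCommGroup Q] [Module k Q]
    (q : ↥(M.restrictScalars k) →ₗ[k] Q)
    (hq : Function.Surjective q)
    (hker : LinearMap.ker q =
      (M'.restrictScalars k).comap (M.restrictScalars k).subtype) :
    FiniteDimensional k Q ∧
    ∀ φ : Q →ₗ[k] Q,
      (∀ (x : Fin r → LaurentSeries k) (hx : x ∈ M.restrictScalars k)
          (hx' : n.mulVec x ∈ M.restrictScalars k),
        φ (q ⟨x, hx⟩) = q ⟨n.mulVec x, hx'⟩) →
      LinearMap.det φ = 1 := by
  have hn : IsNilpotent (n.mulVecLin - 1) := isNilpotent_mulVecLin_sub_one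
    (isNilpotent_sub_one_of_isUpperTriangular (fun _ _ ↦ hlow _ _) hdiag)
  -- `k` acts coefficientwise on `F`, with no scalar tower `k`, `F`, `F` among the instances, so
  -- the restriction to `k` passes through `O`.
  have hf := isNilpotent_restrictScalars_sub_one k
    (isNilpotent_restrictScalars_sub_one (PowerSeries k) hn)
  obtain ⟨hfin, hdet⟩ := unipotent_stabilizer_det_one_on_lattice_quotient_general
    (K := LaurentSeries k) finite_powerSeries_quotient_of_mem_powers_X hf hMfg hM'span
    (Submodule.map_le_iff_le_comap.mp hnM.le) hq hker
  exact ⟨hfin, fun φ hφ ↦ hdet φ (LinearMap.ext fun x ↦ hφ x x.2 _)⟩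
end

section
/- Let K be a field, r ≥ 1, and g ∈ GL_r(K). Suppose g = A·B⁻¹ where A is an invertible lower triangular matrix and B is an upper triangular matrix with all diagonal entries equal to 1. Write A = (a_{i,j}), B = (b_{i,j}), A⁻¹ = (ã_{i,j}), B⁻¹ = (b̃_{i,j}). Then all leading principal minors det(g_{[1,j],[1,j]}) (0 ≤ j ≤ r) are nonzero, and: a_{i,j} = det(g_{[1,j−1]∪{i},[1,j]}) / det(g_{[1,j−1],[1,j−1]}) for i ≥ j; b_{i,j} = (−1)^{j−i}·det(g_{[1,j−1],[1,j]∖{i}}) / det(g_{[1,j−1],[1,j−1]}) for i ≤ j; ã_{i,j} = (−1)^{i−j}·det(g_{[1,i]∖{j},[1,i−1]}) / det(g_{[1,i],[1,i]}) for i ≥ j; and b̃_{i,j} = det(g_{[1,i],[1,i−1]∪{j}}) / det(g_{[1,i],[1,i]}) for i ≤ j. -/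
/-- `[1,j]` (1-indexed), i.e. the set of the first `j` indices of `Fin r`. -/
def Iseg (r j : ℕ) : Finset (Fin r) := Finset.univ.filter (fun l => (l : ℕ) < j)

/-- The minor `det (g_{I,J})` of a square matrix `g`, where the rows in `I` and the columns
in `J` are taken in increasing order (and `0` if `I`, `J` have different cardinalities;
the determinant of the empty matrix is `1`). -/
noncomputable def gMinor {R : Type} [CommRing R] {r : ℕ}
    (g : Matrix (Fin r) (Fin r) R) (I J : Finset (Fin r)) : R :=
  if h : I.card = J.card then
    Matrix.det (Matrix.of fun a b : Fin I.card =>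
      g ((I.orderIsoOfFin rfl a : Fin r)) ((J.orderIsoOfFin rfl (Fin.cast h b) : Fin r)))
  else 0

/-!
With `g = L * U`, `L` lower and `U` upper triangular, the first `n` columns of `g` involve only the
leading `n × n` block of `U`, and its first `n` rows only that of `L`. Hence a minor on the first
`n` columns is a minor of `L` times a leading minor of `U`; for the rows `[1,j-1] ∪ {i}` the minor
of `L` is again triangular and reveals the entry `L i j`. If moreover `g * V` is lower triangular
with `V` upper triangular, multiplying its leading block by the adjugate of that of `g` expresses
the entries of `V` through the cofactors of the last row. The formulas for the other two factors
follow by transposition.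
-/

open Matrix

section Triangular

theorem isUpperTriangular_submatrix {α β R : Type*} [Preorder α] [Preorder β] [Zero R]
    {M : Matrix α α R} (hM : M.IsUpperTriangular) {e : β → α} (he : StrictMono e) :
    (M.submatrix e e).IsUpperTriangular :=
  fun _ _ hab => hM (he hab)

theorem isLowerTriangular_submatrix {α β R : Type*} [Preorder α] [Preorder β] [Zero R]
    {M : Matrix α α R} (hM : M.IsLowerTriangular) {e : β → α} (he : StrictMono e) :
    (M.submatrix e e).IsLowerTriangular :=
  fun _ _ hab => hM (he hab)

theorem mul_apply_self_of_isUpperTriangular {α R : Type*} [LinearOrder α] [Fintype α]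
    [NonUnitalNonAssocSemiring R] {M N : Matrix α α R} (hM : M.IsUpperTriangular)
    (hN : N.IsUpperTriangular) (i : α) : (M * N) i i = M i i * N i i := by
  rw [mul_apply, Finset.sum_eq_single i _ (by simp)]
  intro k _ hk
  rcases lt_or_gt_of_ne hk with h | h
  · rw [hM h, zero_mul]
  · rw [hN h, mul_zero]

theorem submatrix_mul_castLE_of_isUpperTriangular {α β R : Type*} [NonUnitalNonAssocSemiring R]
    {n r : ℕ} (M : Matrix α (Fin r) R) {U : Matrix (Fin r) (Fin r) R} (hU : U.IsUpperTriangular)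
    (h : n ≤ r) (e : β → α) :
    (M * U).submatrix e (Fin.castLE h) =
      M.submatrix e (Fin.castLE h) * U.submatrix (Fin.castLE h) (Fin.castLE h) := by
  ext a b
  simp only [submatrix_apply, mul_apply]
  refine (Finset.sum_of_injOn (Fin.castLE h) (Fin.castLE_injective h).injOn (by simp) ?_
    (by simp)).symm
  intro l _ hl
  have hbl : Fin.castLE h b < l := by
    by_contra! hlb
    exact hl ⟨⟨l, lt_of_le_of_lt hlb b.isLt⟩, by simp, rfl⟩
  rw [show U l (Fin.castLE h b) = 0 from hU hbl, mul_zero]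

variable {R : Type*} [CommRing R] {n r : ℕ}

theorem det_submatrix_snoc_castLE_of_isLowerTriangular {L : Matrix (Fin r) (Fin r) R}
    (hL : L.IsLowerTriangular) (i j : Fin r) :
    (L.submatrix (Fin.snoc (Fin.castLE j.isLt.le) i : Fin (j + 1) → Fin r)
      (Fin.castLE j.isLt)).det =
      (L.submatrix (Fin.castLE j.isLt.le) (Fin.castLE j.isLt.le)).det * L i j := by
  have hsnoc : (L.submatrix (Fin.snoc (Fin.castLE j.isLt.le) i : Fin (j + 1) → Fin r)
      (Fin.castLE j.isLt)).IsLowerTriangular := by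
    intro a b (hab : a < b)
    obtain ⟨a, rfl⟩ := Fin.exists_castSucc_eq.mpr (Fin.ne_last_of_lt hab)
    rw [submatrix_apply, Fin.snoc_castSucc]
    exact hL (Fin.strictMono_castLE j.isLt hab)
  have hlead := isLowerTriangular_submatrix hL (Fin.strictMono_castLE j.isLt.le)
  rw [det_of_isLowerTriangular _ hsnoc, det_of_isLowerTriangular _ hlead, Fin.prod_univ_castSucc]
  simp only [submatrix_apply, Fin.snoc_castSucc, Fin.snoc_last]
  rfl

theorem det_mul_apply_last_of_isLowerTriangular {g V : Matrix (Fin (n + 1)) (Fin (n + 1)) R}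
    (hgV : (g * V).IsLowerTriangular) (i : Fin (n + 1)) :
    g.det * V i (Fin.last n) =
      (-1) ^ (n + i : ℕ) * (g.submatrix Fin.castSucc i.succAbove).det *
        (g * V) (Fin.last n) (Fin.last n) := by
  calc g.det * V i (Fin.last n) = (g.adjugate * (g * V)) i (Fin.last n) := by
        rw [← Matrix.mul_assoc, adjugate_mul, Matrix.smul_mul, Matrix.one_mul, Matrix.smul_apply,
          smul_eq_mul]
    _ = g.adjugate i (Fin.last n) * (g * V) (Fin.last n) (Fin.last n) := by
        rw [mul_apply, Finset.sum_eq_single (Fin.last n) _ (by simp)]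
        intro k _ hk
        rw [show (g * V) k (Fin.last n) = 0 from hgV (Fin.lt_last_iff_ne_last.mpr hk), mul_zero]
    _ = _ := by
        rw [adjugate_fin_succ_eq_det_submatrix, Fin.val_last, Fin.succAbove_last]

end Triangular

section Iseg

variable {n r : ℕ}

theorem coe_Iseg (h : n ≤ r) : (Iseg r n : Set (Fin r)) = Set.range (Fin.castLE h) := by
  simp [Iseg, Fin.range_castLE]

theorem coe_Iseg_union_singleton (h : n ≤ r) (i : Fin r) :
    ((Iseg r n ∪ {i} : Finset (Fin r)) : Set (Fin r)) =
      Set.range (Fin.snoc (Fin.castLE h) i : Fin (n + 1) → Fin r) := by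
  rw [Finset.coe_union, coe_Iseg h, Finset.coe_singleton, Fin.range_snoc, Set.union_singleton]

theorem coe_Iseg_sdiff_singleton (h : n + 1 ≤ r) (i : Fin (n + 1)) :
    ((Iseg r (n + 1) \ {Fin.castLE h i} : Finset (Fin r)) : Set (Fin r)) =
      Set.range (Fin.castLE h ∘ i.succAbove) := by
  rw [Finset.coe_sdiff, coe_Iseg h, Finset.coe_singleton, Set.range_comp, Fin.range_succAbove,
    Set.image_compl_eq_range_sdiff_image (Fin.castLE_injective h), Set.image_singleton]

theorem Iseg_union_singleton_self (j : Fin r) : Iseg r j ∪ {j} = Iseg r (j + 1) := by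
  ext l
  simp only [Iseg, Finset.mem_union, Finset.mem_filter, Finset.mem_univ, true_and,
    Finset.mem_singleton, Fin.ext_iff]
  lia

theorem strictMono_snoc_castLE (h : n ≤ r) {i : Fin r} (hi : n ≤ i) :
    StrictMono (Fin.snoc (Fin.castLE h) i : Fin (n + 1) → Fin r) := by
  intro a b hab
  obtain ⟨a, rfl⟩ := Fin.exists_castSucc_eq.mpr (Fin.ne_last_of_lt hab)
  cases b using Fin.lastCases with
  | last =>
    rw [Fin.snoc_castSucc, Fin.snoc_last]
    exact a.isLt.trans_le hi
  | cast b =>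
    rw [Fin.snoc_castSucc, Fin.snoc_castSucc]
    exact hab

end Iseg

section Minors

variable {R : Type} [CommRing R] {r : ℕ}

theorem gMinor_eq_det_submatrix {n : ℕ} (g : Matrix (Fin r) (Fin r) R) {I J : Finset (Fin r)}
    {e f : Fin n → Fin r} (he : StrictMono e) (hf : StrictMono f)
    (hI : (I : Set (Fin r)) = Set.range e) (hJ : (J : Set (Fin r)) = Set.range f) :
    gMinor g I J = (g.submatrix e f).det := by
  have card_eq {S : Finset (Fin r)} {s : Fin n → Fin r} (hs : StrictMono s)
      (hS : (S : Set (Fin r)) = Set.range s) : S.card = n := by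
    rw [← Set.ncard_coe_finset, hS, ← Set.image_univ, Set.ncard_image_of_injective _ hs.injective,
      Set.ncard_univ, Nat.card_fin]
  obtain rfl := card_eq he hI
  have hcard := card_eq hf hJ
  have he' : e = I.orderEmbOfFin rfl := Finset.orderEmbOfFin_unique rfl
    (fun a => Finset.mem_coe.mp (hI ▸ Set.mem_range_self a)) he
  have hf' : f = J.orderEmbOfFin hcard := Finset.orderEmbOfFin_unique hcard
    (fun a => Finset.mem_coe.mp (hJ ▸ Set.mem_range_self a)) hf
  rw [gMinor, dif_pos hcard.symm, he', hf']
  rfl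

theorem gMinor_transpose (g : Matrix (Fin r) (Fin r) R) (I J : Finset (Fin r)) :
    gMinor gᵀ I J = gMinor g J I := by
  by_cases h : J.card = I.card
  · have hI := (I.range_orderEmbOfFin rfl).symm
    have hJ := (J.range_orderEmbOfFin h).symm
    rw [gMinor_eq_det_submatrix _ (OrderEmbedding.strictMono _) (OrderEmbedding.strictMono _) hI hJ,
      gMinor_eq_det_submatrix _ (OrderEmbedding.strictMono _) (OrderEmbedding.strictMono _) hJ hI,
      ← transpose_submatrix, det_transpose]
  · rw [gMinor, gMinor, dif_neg h, dif_neg (Ne.symm h)]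

theorem gMinor_Iseg_Iseg (g : Matrix (Fin r) (Fin r) R) {n : ℕ} (h : n ≤ r) :
    gMinor g (Iseg r n) (Iseg r n) = (g.submatrix (Fin.castLE h) (Fin.castLE h)).det :=
  gMinor_eq_det_submatrix g (Fin.strictMono_castLE h) (Fin.strictMono_castLE h)
    (coe_Iseg h) (coe_Iseg h)

variable {L U : Matrix (Fin r) (Fin r) R}

theorem gMinor_mul_Iseg_union_singleton (hL : L.IsLowerTriangular) (hU : U.IsUpperTriangular)
    {i j : Fin r} (hij : j ≤ i) :
    gMinor (L * U) (Iseg r j ∪ {i}) (Iseg r (j + 1)) =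
      gMinor (L * U) (Iseg r j) (Iseg r j) * (L i j * U j j) := by
  have hdetU : (U.submatrix (Fin.castLE j.isLt) (Fin.castLE j.isLt)).det =
      (U.submatrix (Fin.castLE j.isLt.le) (Fin.castLE j.isLt.le)).det * U j j := by
    rw [det_of_isUpperTriangular (isUpperTriangular_submatrix hU (Fin.strictMono_castLE _)),
      det_of_isUpperTriangular (isUpperTriangular_submatrix hU (Fin.strictMono_castLE _)),
      Fin.prod_univ_castSucc]
    rfl
  rw [gMinor_eq_det_submatrix _ (strictMono_snoc_castLE j.isLt.le hij)
      (Fin.strictMono_castLE j.isLt) (coe_Iseg_union_singleton _ i) (coe_Iseg _),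
    submatrix_mul_castLE_of_isUpperTriangular L hU, det_mul,
    det_submatrix_snoc_castLE_of_isLowerTriangular hL, hdetU, gMinor_Iseg_Iseg _ j.isLt.le,
    submatrix_mul_castLE_of_isUpperTriangular L hU, det_mul]
  ring

theorem gMinor_mul_Iseg_succ (hL : L.IsLowerTriangular) (hU : U.IsUpperTriangular) (j : Fin r) :
    gMinor (L * U) (Iseg r (j + 1)) (Iseg r (j + 1)) =
      gMinor (L * U) (Iseg r j) (Iseg r j) * (L j j * U j j) := by
  rw [← gMinor_mul_Iseg_union_singleton hL hU le_rfl, Iseg_union_singleton_self]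

theorem gMinor_mul_Iseg_succ_union_singleton (hL : L.IsLowerTriangular)
    (hU : U.IsUpperTriangular) {i j : Fin r} (hij : i ≤ j) :
    gMinor (L * U) (Iseg r (i + 1)) (Iseg r i ∪ {j}) =
      gMinor (L * U) (Iseg r i) (Iseg r i) * (L i i * U i j) := by
  have h := gMinor_mul_Iseg_union_singleton hU.transpose hL.transpose hij
  rwa [← transpose_mul, gMinor_transpose, gMinor_transpose, transpose_apply, transpose_apply,
    mul_comm (U i j)] at h

theorem isUnit_gMinor_mul_Iseg (hL : L.IsLowerTriangular) (hU : U.IsUpperTriangular)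
    (hLdiag : ∀ i, IsUnit (L i i)) (hUdiag : ∀ i, IsUnit (U i i)) {n : ℕ} (hn : n ≤ r) :
    IsUnit (gMinor (L * U) (Iseg r n) (Iseg r n)) := by
  induction n with
  | zero =>
    rw [gMinor_Iseg_Iseg _ hn, det_fin_zero]
    exact isUnit_one
  | succ k ih =>
    rw [gMinor_mul_Iseg_succ hL hU ⟨k, hn⟩]
    exact (ih (Nat.le_of_succ_le hn)).mul ((hLdiag _).mul (hUdiag _))

variable {g V : Matrix (Fin r) (Fin r) R}

theorem gMinor_Iseg_succ_mul_apply (hV : V.IsUpperTriangular) (hgV : (g * V).IsLowerTriangular)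
    {i j : Fin r} (hij : i ≤ j) :
    gMinor g (Iseg r (j + 1)) (Iseg r (j + 1)) * V i j =
      (-1) ^ (j - i : ℕ) * gMinor g (Iseg r j) (Iseg r (j + 1) \ {i}) * (g * V) j j := by
  obtain ⟨i, rfl⟩ : ∃ k : Fin (j + 1), Fin.castLE j.isLt k = i :=
    ⟨⟨i, Nat.lt_succ_of_le hij⟩, rfl⟩
  have hlead := submatrix_mul_castLE_of_isUpperTriangular g hV j.isLt (Fin.castLE j.isLt)
  have hlower := isLowerTriangular_submatrix hgV (Fin.strictMono_castLE j.isLt)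
  have hsign : (-1 : R) ^ (j - Fin.castLE j.isLt i : ℕ) = (-1) ^ (j + i : ℕ) :=
    neg_one_pow_congr (by rw [Nat.even_sub hij, Nat.even_add, Fin.val_castLE])
  have key := det_mul_apply_last_of_isLowerTriangular (hlead ▸ hlower) i
  rw [← hlead] at key
  rw [gMinor_Iseg_Iseg _ j.isLt, hsign, gMinor_eq_det_submatrix g
    (Fin.strictMono_castLE j.isLt.le)
    ((Fin.strictMono_castLE j.isLt).comp (Fin.strictMono_succAbove i))
    (coe_Iseg _) (coe_Iseg_sdiff_singleton _ i)]
  exact key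

theorem apply_mul_gMinor_Iseg_succ {M : Matrix (Fin r) (Fin r) R} (hM : M.IsLowerTriangular)
    (hMg : (M * g).IsUpperTriangular) {i j : Fin r} (hij : j ≤ i) :
    M i j * gMinor g (Iseg r (i + 1)) (Iseg r (i + 1)) =
      (-1) ^ (i - j : ℕ) * gMinor g (Iseg r (i + 1) \ {j}) (Iseg r i) * (M * g) i i := by
  have hgM : (gᵀ * Mᵀ).IsLowerTriangular := transpose_mul M g ▸ hMg.transpose
  have h := gMinor_Iseg_succ_mul_apply hM.transpose hgM hij
  rwa [gMinor_transpose, gMinor_transpose, ← transpose_mul, transpose_apply, transpose_apply,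
    mul_comm] at h

end Minors

theorem gauss_decomposition_minors_general {R : Type} [CommRing R] {r : ℕ}
    {g A B : Matrix (Fin r) (Fin r) R} (hA : IsUnit A.det) (hAlow : A.IsLowerTriangular)
    (hBup : B.IsUpperTriangular) (hBdiag : ∀ i, B i i = 1) (hg : g = A * B⁻¹) :
    (∀ j : ℕ, j ≤ r → IsUnit (gMinor g (Iseg r j) (Iseg r j))) ∧
    (∀ i j : Fin r, j ≤ i →
      A i j * gMinor g (Iseg r j) (Iseg r j) =
        gMinor g (Iseg r j ∪ {i}) (Iseg r (j + 1))) ∧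
    (∀ i j : Fin r, i ≤ j →
      B i j * gMinor g (Iseg r j) (Iseg r j) =
        (-1) ^ (j - i : ℕ) * gMinor g (Iseg r j) (Iseg r (j + 1) \ {i})) ∧
    (∀ i j : Fin r, j ≤ i →
      A⁻¹ i j * gMinor g (Iseg r (i + 1)) (Iseg r (i + 1)) =
        (-1) ^ (i - j : ℕ) * gMinor g (Iseg r (i + 1) \ {j}) (Iseg r i)) ∧
    (∀ i j : Fin r, i ≤ j →
      B⁻¹ i j * gMinor g (Iseg r (i + 1)) (Iseg r (i + 1)) =
        gMinor g (Iseg r (i + 1)) (Iseg r i ∪ {j})) := by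
  have hBunit : IsUnit B.det := by
    simp [det_of_isUpperTriangular hBup, hBdiag]
  have hAdiag (i : Fin r) : IsUnit (A i i) := by
    rw [det_of_isLowerTriangular A hAlow, IsUnit.prod_univ_iff] at hA
    exact hA i
  let _ := invertibleOfIsUnitDet A hA
  let _ := invertibleOfIsUnitDet B hBunit
  have hAinvlow : A⁻¹.IsLowerTriangular := blockTriangular_inv_of_blockTriangular hAlow
  have hBinvup : B⁻¹.IsUpperTriangular := blockTriangular_inv_of_blockTriangular hBup
  have hBinvdiag (i : Fin r) : B⁻¹ i i = 1 := by
    simpa [hBdiag] using (mul_apply_self_of_isUpperTriangular hBup hBinvup i).symm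
  have hgB : g * B = A := by rw [hg, nonsing_inv_mul_cancel_right _ _ hBunit]
  have hAg : A⁻¹ * g = B⁻¹ := by rw [hg, nonsing_inv_mul_cancel_left _ _ hA]
  have hsucc (j : Fin r) : gMinor g (Iseg r (j + 1)) (Iseg r (j + 1)) =
      gMinor g (Iseg r j) (Iseg r j) * A j j := by
    rw [hg, gMinor_mul_Iseg_succ hAlow hBinvup, hBinvdiag, mul_one]
  refine ⟨fun j hj => ?_, fun i j hij => ?_, fun i j hij => ?_, fun i j hij => ?_,
    fun i j hij => ?_⟩
  · rw [hg]
    exact isUnit_gMinor_mul_Iseg hAlow hBinvup hAdiag (fun i => by simp [hBinvdiag]) hj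
  · rw [hg, gMinor_mul_Iseg_union_singleton hAlow hBinvup hij, hBinvdiag, mul_one, mul_comm]
  · have h := gMinor_Iseg_succ_mul_apply hBup (hgB.symm ▸ hAlow) hij
    rw [hgB, hsucc] at h
    exact (hAdiag j).mul_right_cancel (by rw [← h]; ring)
  · have h := apply_mul_gMinor_Iseg_succ hAinvlow (hAg.symm ▸ hBinvup) hij
    rwa [hAg, hBinvdiag, mul_one] at h
  · rw [hsucc, hg, gMinor_mul_Iseg_succ_union_singleton hAlow hBinvup hij]
    ring

/-- minors formulas for the `A·B⁻¹` (lower × upper unipotent) decomposition of an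
invertible matrix `g` over a field. Indices below are 0-indexed: the math index set `[1,j]`
corresponds to `Iseg r j`. -/
theorem gauss_decomposition_minors
    (K : Type) [Field K] (r : ℕ) (hr : 1 ≤ r)
    (g A B : Matrix (Fin r) (Fin r) K)
    (hA : IsUnit A.det)
    (hAlow : ∀ i j : Fin r, i < j → A i j = 0)
    (hBup : ∀ i j : Fin r, j < i → B i j = 0)
    (hBdiag : ∀ i, B i i = 1)
    (hg : g = A * B⁻¹) :
    (∀ j : ℕ, j ≤ r → gMinor g (Iseg r j) (Iseg r j) ≠ 0) ∧
    (∀ i j : Fin r, j ≤ i →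
      A i j = gMinor g (Iseg r j.val ∪ {i}) (Iseg r (j.val + 1)) /
        gMinor g (Iseg r j.val) (Iseg r j.val)) ∧
    (∀ i j : Fin r, i ≤ j →
      B i j = (-1 : K) ^ (j.val - i.val) *
        gMinor g (Iseg r j.val) (Iseg r (j.val + 1) \ {i}) /
        gMinor g (Iseg r j.val) (Iseg r j.val)) ∧
    (∀ i j : Fin r, j ≤ i →
      A⁻¹ i j = (-1 : K) ^ (i.val - j.val) *
        gMinor g (Iseg r (i.val + 1) \ {j}) (Iseg r i.val) /
        gMinor g (Iseg r (i.val + 1)) (Iseg r (i.val + 1))) ∧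
    (∀ i j : Fin r, i ≤ j →
      B⁻¹ i j = gMinor g (Iseg r (i.val + 1)) (Iseg r i.val ∪ {j}) /
        gMinor g (Iseg r (i.val + 1)) (Iseg r (i.val + 1))) := by
  obtain ⟨hminor, hA_entry, hB_entry, hAinv_entry, hBinv_entry⟩ :=
    gauss_decomposition_minors_general hA (fun i j h => hAlow i j h) (fun i j h => hBup i j h)
      hBdiag hg
  have hne (j : ℕ) (hj : j ≤ r) : gMinor g (Iseg r j) (Iseg r j) ≠ 0 := (hminor j hj).ne_zero
  exact ⟨hne, fun i j hij => eq_div_of_mul_eq (hne _ j.isLt.le) (hA_entry i j hij),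
    fun i j hij => eq_div_of_mul_eq (hne _ j.isLt.le) (hB_entry i j hij),
    fun i j hij => eq_div_of_mul_eq (hne _ i.isLt) (hAinv_entry i j hij),
    fun i j hij => eq_div_of_mul_eq (hne _ i.isLt) (hBinv_entry i j hij)⟩
end

section
/- Let k be a field, r ≥ 1, y ∈ M_r(k), and work over the field k(ϖ) of rational functions. Set g = y + ϖ·Id_r and a_i = det(g_{[1,i],[1,i]}) for 1 ≤ i ≤ r (a monic polynomial of degree i in ϖ; set a₀ = 1), and let w₀ be the permutation matrix of the permutation i ↦ r+1−i. Then w₀·g = n·w₀·t·n′ in GL_r(k(ϖ)), where: t = diag(a₁, a₂/a₁, …, a_r/a_{r−1}); n is the upper triangular unipotent matrix with entries n_{i,j} = det(g_{[1,r−j]∪{r+1−i},[1,r+1−j]}) / det(g_{[1,r+1−j],[1,r+1−j]}) for i < j; and n′ is the upper triangular unipotent matrix that is the inverse of the unipotent matrix whose (i,j)-entry for i < j is (−1)^{j−i}·det(g_{[1,j−1],[1,j]∖{i}}) / det(g_{[1,j−1],[1,j−1]}), equivalently n′_{i,j} = det(g_{[1,i],[1,i−1]∪{j}}) / det(g_{[1,i],[1,i]})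 for i < j. Moreover the inverse of n has entries (n⁻¹)_{i,j} = (−1)^{j−i}·det(g_{[1,r+1−i]∖{r+1−j},[1,r−i]}) / det(g_{[1,r−i],[1,r−i]}) for i < j. -/
/-!
Let `G` be a matrix whose leading principal minors of order less than `r` are nonzero, and `B` the
upper unitriangular matrix of signed minors whose inverse is claimed to be `n′`. Up to division by a
leading principal minor, entry `(a, j)` of `G * B` is the Laplace expansion of the minor of `G` with
rows `[1,j-1]` and `a` and with columns `[1,j]`. It vanishes when row `a` is repeated, so
`G * B = L * T` with `L` lower unitriangular and `T` diagonal. The same identity for `Gᵀ` reads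
`V * G = T * U`, where `U` is `n′` and `V` is lower unitriangular. Computing `V * G * B` in two ways
gives `(V * L) * T = T * (U * B)`, a lower triangular matrix equal to an upper triangular one, which
forces `U * B = 1`. Hence `G = L * T * U`, and `n` is the conjugate of `L` by `w₀`.
-/

namespace Bruhat

open Matrix

variable {R : Type} [CommRing R] {r : ℕ}

section Minors

theorem gMinor_image {m : ℕ} (g : Matrix (Fin r) (Fin r) R) {e f : Fin m → Fin r}
    (he : StrictMono e) (hf : StrictMono f) :
    gMinor g (Finset.univ.image e) (Finset.univ.image f) = (g.submatrix e f).det := by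
  generalize hI : Finset.univ.image e = I, hJ : Finset.univ.image f = J
  have cardI : I.card = m := by simp [← hI, Finset.card_image_of_injective _ he.injective]
  have cardJ : J.card = m := by simp [← hJ, Finset.card_image_of_injective _ hf.injective]
  subst cardI
  have e_eq : e = I.orderEmbOfFin rfl := Finset.orderEmbOfFin_unique rfl (by simp [← hI]) he
  have f_eq : f = J.orderEmbOfFin cardJ := Finset.orderEmbOfFin_unique cardJ (by simp [← hJ]) hf
  rw [gMinor, dif_pos cardJ.symm, e_eq, f_eq]
  rfl

theorem gMinor_self (g : Matrix (Fin r) (Fin r) R) (I : Finset (Fin r)) :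
    gMinor g I I = (g.submatrix (I.orderEmbOfFin rfl) (I.orderEmbOfFin rfl)).det :=
  dif_pos rfl

theorem gMinor_transpose (g : Matrix (Fin r) (Fin r) R) (I J : Finset (Fin r)) :
    gMinor gᵀ I J = gMinor g J I := by
  by_cases h : I.card = J.card
  · have image_I : I = Finset.univ.image (I.orderEmbOfFin rfl) := by simp
    have image_J : J = Finset.univ.image (J.orderEmbOfFin h.symm) := by simp
    rw [image_I, image_J,
      gMinor_image _ (OrderEmbedding.strictMono _) (OrderEmbedding.strictMono _),
      gMinor_image _ (OrderEmbedding.strictMono _) (OrderEmbedding.strictMono _),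
      ← transpose_submatrix, det_transpose]
  · rw [gMinor, gMinor, dif_neg h, dif_neg (Ne.symm h)]

theorem map_gMinor {S : Type} [CommRing S] (φ : R →+* S) (g : Matrix (Fin r) (Fin r) R)
    (I J : Finset (Fin r)) : φ (gMinor g I J) = gMinor (g.map φ) I J := by
  unfold gMinor
  split_ifs with h
  · exact φ.map_det _
  · exact map_zero φ

theorem monic_gMinor_map_C_add_X_smul_one (y : Matrix (Fin r) (Fin r) R) (I : Finset (Fin r)) :
    (gMinor (y.map Polynomial.C + (Polynomial.X : Polynomial R) • 1) I I).Monic := by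
  let e := I.orderEmbOfFin rfl
  have submatrix_eq : (y.map Polynomial.C + (Polynomial.X : Polynomial R) • 1).submatrix e e =
      charmatrix (-y.submatrix e e) := by
    ext p q : 2
    simp [charmatrix_apply, smul_one_eq_diagonal, diagonal_apply, add_comm]
  rw [gMinor_self, submatrix_eq]
  exact charpoly_monic _

theorem gMinor_map_C_add_X_smul_one_ne_zero [Nontrivial R] {S : Type} [CommRing S]
    {φ : Polynomial R →+* S} (hφ : Function.Injective φ) (y : Matrix (Fin r) (Fin r) R)
    (I : Finset (Fin r)) :
    gMinor ((y.map Polynomial.C + (Polynomial.X : Polynomial R) • 1).map φ) I I ≠ 0 := by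
  rw [← map_gMinor, map_ne_zero_iff φ hφ]
  exact (monic_gMinor_map_C_add_X_smul_one y I).ne_zero

end Minors

section InitialSegments

@[simp]
theorem mem_Iseg {m : ℕ} {i : Fin r} : i ∈ Iseg r m ↔ (i : ℕ) < m := by simp [Iseg]

theorem Iseg_eq_image_castLE {m : ℕ} (h : m ≤ r) :
    Iseg r m = Finset.univ.image (Fin.castLE h) := by
  ext i
  simpa using ⟨fun hi => ⟨⟨i, hi⟩, rfl⟩, fun ⟨p, hp⟩ => hp ▸ p.2⟩

theorem Iseg_union_singleton {m : ℕ} (h : m ≤ r) (a : Fin r) :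
    Iseg r m ∪ {a} = Finset.univ.image (Fin.snoc (α := fun _ => Fin r) (Fin.castLE h) a) := by
  ext i
  simp [Iseg_eq_image_castLE h, Fin.exists_fin_succ', eq_comm (b := i), or_comm]

theorem Iseg_union_self (j : Fin r) : Iseg r j ∪ {j} = Iseg r (j + 1) := by
  ext i
  simp only [Finset.mem_union, mem_Iseg, Finset.mem_singleton, Fin.ext_iff]
  omega

theorem Iseg_succ_sdiff_self (j : Fin r) : Iseg r (j + 1) \ {j} = Iseg r j := by
  ext i
  simp only [Finset.mem_sdiff, mem_Iseg, Finset.mem_singleton, Fin.ext_iff]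
  omega

theorem Iseg_succ_sdiff_castLE {m : ℕ} (h : m + 1 ≤ r) (i : Fin (m + 1)) :
    Iseg r (m + 1) \ {Fin.castLE h i} = Finset.univ.image (Fin.castLE h ∘ i.succAbove) := by
  rw [Iseg_eq_image_castLE h, ← Finset.image_image, Fin.image_succAbove_univ,
    Finset.compl_eq_univ_sdiff, Finset.image_sdiff _ _ (Fin.castLE_injective h),
    Finset.image_singleton]

theorem strictMono_snoc_castLE {m : ℕ} (h : m ≤ r) {a : Fin r} (ha : m ≤ a) :
    StrictMono (Fin.snoc (α := fun _ => Fin r) (Fin.castLE h) a) := by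
  intro p q hpq
  obtain ⟨p, rfl⟩ := Fin.exists_castSucc_eq.mpr (Fin.ne_last_of_lt hpq)
  rw [Fin.snoc_castSucc]
  induction q using Fin.lastCases with
  | last =>
    rw [Fin.snoc_last]
    exact p.2.trans_le ha
  | cast q =>
    rw [Fin.snoc_castSucc]
    exact hpq

end InitialSegments

section BorderedMinors

/-- The leading principal submatrix of order `j` bordered by row `a` and column `j + 1` (counted
from `1`): its rows are `[1,j]` followed by `a`, its columns `[1,j+1]`. Row `a` may already lie in
`[1,j]`, in which case it occurs twice. -/
def borderedSubmatrix (G : Matrix (Fin r) (Fin r) R) (j a : Fin r) :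
    Matrix (Fin (j + 1)) (Fin (j + 1)) R :=
  G.submatrix (Fin.snoc (α := fun _ => Fin r) (Fin.castLE j.2.le) a) (Fin.castLE j.2)

theorem det_borderedSubmatrix_of_lt (G : Matrix (Fin r) (Fin r) R) {j a : Fin r} (h : a < j) :
    (borderedSubmatrix G j a).det = 0 := by
  let p : Fin j := ⟨a, h⟩
  refine det_zero_of_row_eq (Fin.castSucc_lt_last p).ne (funext fun q => ?_)
  simp only [borderedSubmatrix, submatrix_apply, Fin.snoc_castSucc, Fin.snoc_last]
  rfl

theorem det_borderedSubmatrix_of_le (G : Matrix (Fin r) (Fin r) R) {j a : Fin r} (h : j ≤ a) :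
    (borderedSubmatrix G j a).det = gMinor G (Iseg r j ∪ {a}) (Iseg r (j + 1)) := by
  rw [Iseg_union_singleton j.2.le, Iseg_eq_image_castLE j.2,
    gMinor_image G (strictMono_snoc_castLE _ h) (Fin.strictMono_castLE _), borderedSubmatrix]

theorem det_borderedSubmatrix_eq_sum (G : Matrix (Fin r) (Fin r) R) (j a : Fin r) :
    (borderedSubmatrix G j a).det = ∑ i : Fin (j + 1), G a (Fin.castLE j.2 i) *
      ((-1) ^ (j - i : ℕ) * gMinor G (Iseg r j) (Iseg r (j + 1) \ {Fin.castLE j.2 i})) := by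
  rw [det_succ_row _ (Fin.last j)]
  refine Finset.sum_congr rfl fun i _ => ?_
  have sign : (-1 : R) ^ (j + i : ℕ) = (-1) ^ (j - i : ℕ) := by
    rw [show (j + i : ℕ) = (j - i) + 2 * i by omega, pow_add, pow_mul, neg_one_sq,
      one_pow, mul_one]
  have minor : ((borderedSubmatrix G j a).submatrix (Fin.last j).succAbove i.succAbove).det =
      gMinor G (Iseg r j) (Iseg r (j + 1) \ {Fin.castLE j.2 i}) := by
    rw [Iseg_succ_sdiff_castLE j.2, Iseg_eq_image_castLE j.2.le,
      gMinor_image G (Fin.strictMono_castLE _)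
        ((Fin.strictMono_castLE _).comp (Fin.strictMono_succAbove i))]
    congr 1
    ext p q
    simp [borderedSubmatrix]
  rw [minor, Fin.val_last, sign, borderedSubmatrix, submatrix_apply, Fin.snoc_last]
  ring

end BorderedMinors

section Triangular

variable {m S : Type*} [LinearOrder m] [Fintype m]

theorem mul_apply_self_of_isUpperTriangular [NonUnitalNonAssocSemiring S] {M N : Matrix m m S}
    (hM : M.IsUpperTriangular) (hN : N.IsUpperTriangular) (i : m) :
    (M * N) i i = M i i * N i i := by
  rw [mul_apply]
  refine Finset.sum_eq_single i (fun l _ hl => ?_) (by simp)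
  rcases hl.lt_or_gt with h | h
  · rw [hM h, zero_mul]
  · rw [hN h, mul_zero]

theorem eq_one_of_mul_diagonal_eq_diagonal_mul [Semiring S] [NoZeroDivisors S]
    {P Q : Matrix m m S} {d : m → S} (hP : P.IsLowerTriangular) (hQ : Q.IsUpperTriangular)
    (diag_Q : ∀ i, Q i i = 1) (hd : ∀ i j, i < j → d i ≠ 0)
    (h : P * diagonal d = diagonal d * Q) : Q = 1 := by
  ext i j
  rcases lt_trichotomy i j with hij | rfl | hij
  · have entry : P i j * d j = d i * Q i j := by
      simpa only [mul_diagonal, diagonal_mul] using congrFun₂ h i j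
    rw [hP (OrderDual.toDual_lt_toDual.mpr hij), zero_mul] at entry
    rw [one_apply_ne hij.ne]
    exact (mul_eq_zero.mp entry.symm).resolve_left (hd i j hij)
  · rw [diag_Q, one_apply_eq]
  · rw [hQ hij, one_apply_ne hij.ne']

end Triangular

section GaussDecomposition

variable {K : Type} [Field K] (G : Matrix (Fin r) (Fin r) K)

/-- The diagonal entries of the middle factor `t` of the decomposition: the quotients of
consecutive leading principal minors, junk where the denominator vanishes. -/
noncomputable def pivot : Fin r → K := fun l =>
  gMinor G (Iseg r (l.val + 1)) (Iseg r (l.val + 1)) / gMinor G (Iseg r l.val) (Iseg r l.val)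

/-- The upper unitriangular factor `n′` in the factorization of `G` (and of `w₀ * G`). -/
noncomputable def upperFactor : Matrix (Fin r) (Fin r) K :=
  Matrix.of fun i j =>
    if i = j then 1 else if i < j then
      gMinor G (Iseg r (i.val + 1)) (Iseg r i.val ∪ {j}) /
        gMinor G (Iseg r (i.val + 1)) (Iseg r (i.val + 1))
    else 0

/-- The upper unitriangular matrix of signed minors that is inverse to `upperFactor G` when the
leading principal minors of order less than `r` are nonzero. -/
noncomputable def upperFactorInv : Matrix (Fin r) (Fin r) K :=
  Matrix.of fun i j =>
    if i = j then 1 else if i < j then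
      (-1 : K) ^ (j.val - i.val) * gMinor G (Iseg r j.val) (Iseg r (j.val + 1) \ {i}) /
        gMinor G (Iseg r j.val) (Iseg r j.val)
    else 0

/-- The lower unitriangular factor of `G`, encoded through the upper one of `Gᵀ`. -/
noncomputable def lowerFactor : Matrix (Fin r) (Fin r) K := (upperFactor Gᵀ)ᵀ

/-- The lower unitriangular matrix of signed minors that is inverse to `lowerFactor G` when the
leading principal minors of order less than `r` are nonzero. -/
noncomputable def lowerFactorInv : Matrix (Fin r) (Fin r) K := (upperFactorInv Gᵀ)ᵀ

theorem pivot_transpose : pivot Gᵀ = pivot G := by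
  ext l
  simp only [pivot, gMinor_transpose]

theorem upperFactor_isUpperTriangular : (upperFactor G).IsUpperTriangular := fun i j h => by
  have h : j < i := h
  simp [upperFactor, h.ne', h.not_gt]

theorem upperFactorInv_isUpperTriangular : (upperFactorInv G).IsUpperTriangular := fun i j h => by
  have h : j < i := h
  simp [upperFactorInv, h.ne', h.not_gt]

theorem upperFactor_apply_self (i : Fin r) : upperFactor G i i = 1 := by simp [upperFactor]

theorem upperFactorInv_apply_self (i : Fin r) : upperFactorInv G i i = 1 := by
  simp [upperFactorInv]

theorem upperFactorInv_apply_of_le {i j : Fin r} (hj : gMinor G (Iseg r j) (Iseg r j) ≠ 0)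
    (h : i ≤ j) : upperFactorInv G i j =
      (-1) ^ (j - i : ℕ) * gMinor G (Iseg r j) (Iseg r (j + 1) \ {i}) /
        gMinor G (Iseg r j) (Iseg r j) := by
  rcases h.eq_or_lt with rfl | h
  · simp [upperFactorInv, Iseg_succ_sdiff_self, hj]
  · simp [upperFactorInv, h, h.ne]

theorem lowerFactor_apply (i j : Fin r) :
    lowerFactor G i j = if i = j then 1 else if j < i then
      gMinor G (Iseg r j ∪ {i}) (Iseg r (j + 1)) / gMinor G (Iseg r (j + 1)) (Iseg r (j + 1))
    else 0 := by
  simp only [lowerFactor, upperFactor, transpose_apply, of_apply, gMinor_transpose, eq_comm]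

theorem mul_upperFactorInv_apply {j : Fin r} (hj : gMinor G (Iseg r j) (Iseg r j) ≠ 0)
    (a : Fin r) : (G * upperFactorInv G) a j =
      (borderedSubmatrix G j a).det / gMinor G (Iseg r j) (Iseg r j) := by
  rw [mul_apply, det_borderedSubmatrix_eq_sum, Finset.sum_div]
  refine (Fintype.sum_of_injective _ (Fin.castLE_injective j.2) _ _ (fun i hi => ?_)
    fun i => ?_).symm
  · have hji : j < i := by simpa [Fin.range_castLE, Nat.lt_succ_iff] using hi
    rw [upperFactorInv_isUpperTriangular G hji, mul_zero]
  · have hij : Fin.castLE j.2 i ≤ j := Nat.lt_succ_iff.mp i.2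
    rw [upperFactorInv_apply_of_le G hj hij, mul_div_assoc, Fin.val_castLE]

theorem lowerFactor_mul_diagonal_pivot_apply {a j : Fin r}
    (h : j < a → gMinor G (Iseg r (j + 1)) (Iseg r (j + 1)) ≠ 0) :
    (lowerFactor G * diagonal (pivot G)) a j =
      (borderedSubmatrix G j a).det / gMinor G (Iseg r j) (Iseg r j) := by
  rw [mul_diagonal, lowerFactor_apply, pivot]
  rcases lt_trichotomy a j with haj | rfl | haj
  · rw [det_borderedSubmatrix_of_lt G haj]
    simp [haj.ne, haj.not_gt]
  · rw [det_borderedSubmatrix_of_le G le_rfl, Iseg_union_self, if_pos rfl, one_mul]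
  · rw [det_borderedSubmatrix_of_le G haj.le, if_neg haj.ne', if_pos haj,
      div_mul_div_cancel₀ (h haj)]

variable {G}

theorem mul_upperFactorInv (hG : ∀ i < r, gMinor G (Iseg r i) (Iseg r i) ≠ 0) :
    G * upperFactorInv G = lowerFactor G * diagonal (pivot G) := by
  ext a j
  rw [mul_upperFactorInv_apply G (hG j j.2), lowerFactor_mul_diagonal_pivot_apply G fun h =>
    hG _ (Nat.lt_of_le_of_lt h a.2)]

theorem gMinor_transpose_Iseg_ne_zero (hG : ∀ i < r, gMinor G (Iseg r i) (Iseg r i) ≠ 0) :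
    ∀ i < r, gMinor Gᵀ (Iseg r i) (Iseg r i) ≠ 0 := by
  simpa only [gMinor_transpose] using hG

theorem lowerFactorInv_mul (hG : ∀ i < r, gMinor G (Iseg r i) (Iseg r i) ≠ 0) :
    lowerFactorInv G * G = diagonal (pivot G) * upperFactor G := by
  have h := congrArg transpose (mul_upperFactorInv (gMinor_transpose_Iseg_ne_zero hG))
  simpa [lowerFactor, lowerFactorInv, pivot_transpose] using h

theorem upperFactor_mul_upperFactorInv (hG : ∀ i < r, gMinor G (Iseg r i) (Iseg r i) ≠ 0) :
    upperFactor G * upperFactorInv G = 1 := by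
  have isLower : (lowerFactorInv G * lowerFactor G).IsLowerTriangular :=
    (upperFactorInv_isUpperTriangular Gᵀ).transpose.mul
      (upperFactor_isUpperTriangular Gᵀ).transpose
  have isUpper : (upperFactor G * upperFactorInv G).IsUpperTriangular :=
    (upperFactor_isUpperTriangular G).mul (upperFactorInv_isUpperTriangular G)
  refine eq_one_of_mul_diagonal_eq_diagonal_mul isLower isUpper (fun i => ?_) (d := pivot G)
    (fun i j hij => div_ne_zero (hG _ (Nat.lt_of_le_of_lt hij j.2)) (hG _ i.2)) ?_
  · rw [mul_apply_self_of_isUpperTriangular (upperFactor_isUpperTriangular G)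
      (upperFactorInv_isUpperTriangular G), upperFactor_apply_self, upperFactorInv_apply_self,
      one_mul]
  · rw [Matrix.mul_assoc, ← mul_upperFactorInv hG, ← Matrix.mul_assoc, lowerFactorInv_mul hG,
      Matrix.mul_assoc]

theorem lowerFactorInv_mul_lowerFactor (hG : ∀ i < r, gMinor G (Iseg r i) (Iseg r i) ≠ 0) :
    lowerFactorInv G * lowerFactor G = 1 := by
  rw [lowerFactorInv, lowerFactor, ← transpose_mul,
    upperFactor_mul_upperFactorInv (gMinor_transpose_Iseg_ne_zero hG), transpose_one]

theorem eq_lowerFactor_mul_diagonal_mul_upperFactor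
    (hG : ∀ i < r, gMinor G (Iseg r i) (Iseg r i) ≠ 0) :
    G = lowerFactor G * diagonal (pivot G) * upperFactor G := by
  rw [← mul_upperFactorInv hG, Matrix.mul_assoc,
    mul_eq_one_comm.mp (upperFactor_mul_upperFactorInv hG), Matrix.mul_one]

end GaussDecomposition

section BruhatDecomposition

/-- The permutation matrix `w₀` of `i ↦ r + 1 - i`. -/
def reversalMatrix (r : ℕ) (S : Type*) [Zero S] [One S] : Matrix (Fin r) (Fin r) S :=
  Matrix.of fun i j => if j = Fin.rev i then 1 else 0

theorem submatrix_rev_mul_reversalMatrix {S : Type*} [NonAssocSemiring S]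
    (M : Matrix (Fin r) (Fin r) S) :
    M.submatrix Fin.rev Fin.rev * reversalMatrix r S = reversalMatrix r S * M := by
  ext i j
  have eq_rev (l : Fin r) : j = l.rev ↔ l = j.rev := by rw [eq_comm, Fin.rev_eq_iff]
  simp [reversalMatrix, mul_apply, eq_rev]

variable {K : Type} [Field K]

/-- The upper unitriangular factor `n` of `w₀ * G`, the conjugate of `lowerFactor G` by `w₀`. -/
noncomputable def bruhatLeftFactor (G : Matrix (Fin r) (Fin r) K) : Matrix (Fin r) (Fin r) K :=
  Matrix.of fun i j =>
    if i = j then 1 else if i < j then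
      gMinor G (Iseg r (r - 1 - j.val) ∪ {Fin.rev i}) (Iseg r (r - j.val)) /
        gMinor G (Iseg r (r - j.val)) (Iseg r (r - j.val))
    else 0

theorem sub_one_sub_val_eq_val_rev (i : Fin r) : r - 1 - i = (i.rev : ℕ) := by
  rw [Fin.val_rev]; omega

theorem sub_val_eq_val_rev_add_one (i : Fin r) : r - i = (i.rev : ℕ) + 1 := by
  rw [Fin.val_rev]; omega

theorem bruhatLeftFactor_eq_submatrix (G : Matrix (Fin r) (Fin r) K) :
    bruhatLeftFactor G = (lowerFactor G).submatrix Fin.revPerm Fin.revPerm := by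
  ext i j
  simp only [bruhatLeftFactor, submatrix_apply, of_apply, lowerFactor_apply, Fin.revPerm_apply,
    sub_one_sub_val_eq_val_rev, sub_val_eq_val_rev_add_one, Fin.rev_inj, Fin.rev_lt_rev]

variable {G : Matrix (Fin r) (Fin r) K}

theorem inv_bruhatLeftFactor (hG : ∀ i < r, gMinor G (Iseg r i) (Iseg r i) ≠ 0) :
    (bruhatLeftFactor G)⁻¹ = (lowerFactorInv G).submatrix Fin.revPerm Fin.revPerm := by
  rw [bruhatLeftFactor_eq_submatrix, inv_submatrix_equiv,
    inv_eq_left_inv (lowerFactorInv_mul_lowerFactor hG)]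

theorem inv_bruhatLeftFactor_apply (hG : ∀ i < r, gMinor G (Iseg r i) (Iseg r i) ≠ 0)
    {i j : Fin r} (hij : i < j) :
    (bruhatLeftFactor G)⁻¹ i j = (-1) ^ (j - i : ℕ) *
      gMinor G (Iseg r (r - i) \ {Fin.rev j}) (Iseg r (r - 1 - i)) /
        gMinor G (Iseg r (r - 1 - i)) (Iseg r (r - 1 - i)) := by
  have exponent : (i.rev - j.rev : ℕ) = j - i := by simp only [Fin.val_rev]; omega
  rw [inv_bruhatLeftFactor hG, submatrix_apply, lowerFactorInv, transpose_apply,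
    Fin.revPerm_apply, Fin.revPerm_apply, upperFactorInv_apply_of_le _
      (gMinor_transpose_Iseg_ne_zero hG _ i.rev.2) (Fin.rev_le_rev.mpr hij.le),
    exponent, gMinor_transpose, gMinor_transpose, sub_val_eq_val_rev_add_one,
    sub_one_sub_val_eq_val_rev]

theorem reversalMatrix_mul_eq (hG : ∀ i < r, gMinor G (Iseg r i) (Iseg r i) ≠ 0) :
    reversalMatrix r K * G =
      bruhatLeftFactor G * reversalMatrix r K * diagonal (pivot G) * upperFactor G := by
  have conj : bruhatLeftFactor G * reversalMatrix r K = reversalMatrix r K * lowerFactor G := by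
    rw [bruhatLeftFactor_eq_submatrix]
    exact submatrix_rev_mul_reversalMatrix _
  rw [conj, Matrix.mul_assoc, Matrix.mul_assoc, ← Matrix.mul_assoc (lowerFactor G),
    ← eq_lowerFactor_mul_diagonal_mul_upperFactor hG]

end BruhatDecomposition

end Bruhat

open Bruhat in
theorem bruhat_decomposition_of_y_plus_varpi_general {K : Type} [Field K] {r : ℕ}
    (G : Matrix (Fin r) (Fin r) K) (hG : ∀ i < r, gMinor G (Iseg r i) (Iseg r i) ≠ 0) :
    reversalMatrix r K * G =
      bruhatLeftFactor G * reversalMatrix r K * Matrix.diagonal (pivot G) * upperFactor G ∧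
    (upperFactor G * upperFactorInv G = 1 ∧ upperFactorInv G * upperFactor G = 1) ∧
    (∀ i j : Fin r, i < j →
      (bruhatLeftFactor G)⁻¹ i j = (-1) ^ (j.val - i.val) *
        gMinor G (Iseg r (r - i.val) \ {Fin.rev j}) (Iseg r (r - 1 - i.val)) /
        gMinor G (Iseg r (r - 1 - i.val)) (Iseg r (r - 1 - i.val))) :=
  ⟨reversalMatrix_mul_eq hG,
    ⟨upperFactor_mul_upperFactorInv hG, mul_eq_one_comm.mp (upperFactor_mul_upperFactorInv hG)⟩,
    fun _ _ => inv_bruhatLeftFactor_apply hG⟩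

/-- the explicit Bruhat decomposition `w₀·(y + ϖ·Id) = n·w₀·t·n′` over `k(ϖ)`,
with all the entries of `n`, `t`, `n′` and `n⁻¹` expressed by minors of `g = y + ϖ·Id`. -/
theorem bruhat_decomposition_of_y_plus_varpi
    (k : Type) [Field k] (r : ℕ) (hr : 1 ≤ r)
    (y : Matrix (Fin r) (Fin r) k) :
    -- `g = y + ϖ·Id` over the polynomial ring `k[ϖ]`
    let gP : Matrix (Fin r) (Fin r) (Polynomial k) :=
      y.map Polynomial.C + (Polynomial.X : Polynomial k) • (1 : Matrix (Fin r) (Fin r) (Polynomial k))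
    -- leading principal minors `a_i = det g_{[1,i],[1,i]}` (with `a 0 = 1`)
    let a : ℕ → Polynomial k := fun i => gMinor gP (Iseg r i) (Iseg r i)
    -- everything is viewed in `K = k(ϖ)`
    let φ : Polynomial k → RatFunc k := fun p => algebraMap (Polynomial k) (RatFunc k) p
    let G : Matrix (Fin r) (Fin r) (RatFunc k) := gP.map φ
    -- the antidiagonal permutation matrix `w₀`
    let w₀ : Matrix (Fin r) (Fin r) (RatFunc k) :=
      Matrix.of fun i j => if j = Fin.rev i then 1 else 0
    -- `t = diag (a₁, a₂/a₁, …, a_r/a_{r-1})`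
    let t : Matrix (Fin r) (Fin r) (RatFunc k) :=
      Matrix.diagonal fun l => φ (a (l.val + 1)) / φ (a l.val)
    -- the unipotent matrix `n`
    let n : Matrix (Fin r) (Fin r) (RatFunc k) :=
      Matrix.of fun i j =>
        if i = j then 1 else if i < j then
          φ (gMinor gP (Iseg r (r - 1 - j.val) ∪ {Fin.rev i}) (Iseg r (r - j.val))) /
            φ (gMinor gP (Iseg r (r - j.val)) (Iseg r (r - j.val)))
        else 0
    -- the unipotent matrix `n′`
    let n' : Matrix (Fin r) (Fin r) (RatFunc k) :=
      Matrix.of fun i j =>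
        if i = j then 1 else if i < j then
          φ (gMinor gP (Iseg r (i.val + 1)) (Iseg r i.val ∪ {j})) /
            φ (gMinor gP (Iseg r (i.val + 1)) (Iseg r (i.val + 1)))
        else 0
    -- the unipotent matrix of which `n′` is the inverse
    let B : Matrix (Fin r) (Fin r) (RatFunc k) :=
      Matrix.of fun i j =>
        if i = j then 1 else if i < j then
          (-1 : RatFunc k) ^ (j.val - i.val) *
            φ (gMinor gP (Iseg r j.val) (Iseg r (j.val + 1) \ {i})) /
            φ (gMinor gP (Iseg r j.val) (Iseg r j.val))
        else 0
    -- the conclusions: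
    w₀ * G = n * w₀ * t * n' ∧
    (n' * B = 1 ∧ B * n' = 1) ∧
    (∀ i j : Fin r, i < j →
      n⁻¹ i j = (-1 : RatFunc k) ^ (j.val - i.val) *
        φ (gMinor gP (Iseg r (r - i.val) \ {Fin.rev j}) (Iseg r (r - 1 - i.val))) /
        φ (gMinor gP (Iseg r (r - 1 - i.val)) (Iseg r (r - 1 - i.val)))) := by
  simp only [Bruhat.map_gMinor]
  exact bruhat_decomposition_of_y_plus_varpi_general _ fun _ _ =>
    Bruhat.gMinor_map_C_add_X_smul_one_ne_zero (RatFunc.algebraMap_injective k) y _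
end

section
/- Let R be a commutative ring and r ≥ 1. Let g ∈ M_r(R[ϖ]) be a symmetric matrix such that, for every 1 ≤ i ≤ r, the determinant of the leading principal i×i submatrix of g is a monic polynomial of degree i in ϖ. Then there exist an upper triangular matrix u ∈ M_r(R[ϖ]) with all diagonal entries equal to 1 and a symmetric matrix x ∈ M_r(R) such that ᵗu·g·u = x + ϖ·Id_r. -/
open Matrix Polynomial

/-!
Up to the sign of `x`, the normal form `x + ϖ` is a characteristic matrix `ϖ - x`. Induct on the
size of `g`, so that the leading block is already `ϖ - x`. As `ϖ - x` is monic as a polynomial with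
matrix coefficients, dividing the last column by it leaves a constant remainder, and subtracting
the multiple of `ϖ - x` is a unipotent change of basis. Only the corner entry `D` may still be
nonlinear. By linearity in the last row, the determinant is the characteristic polynomial of a
constant matrix plus `det (ϖ - x) * (D - ϖ)`; comparing degrees, `D` is monic of degree one.
-/

section Blocks

variable {m n S : Type*} [Fintype m] [Fintype n] [DecidableEq n] [CommRing S]

theorem transpose_fromBlocks_mul_fromBlocks_mul {A : Matrix m m S} (hA : A.IsSymm)
    (B v : Matrix m n S) (D : Matrix n n S) (u : Matrix m m S) :
    (fromBlocks u (u * v) 0 1)ᵀ * fromBlocks A B Bᵀ D * fromBlocks u (u * v) 0 1 =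
      fromBlocks (uᵀ * A * u) (uᵀ * A * u * v + uᵀ * B) (uᵀ * A * u * v + uᵀ * B)ᵀ
        (vᵀ * (uᵀ * A * u * v + uᵀ * B) + (Bᵀ * (u * v) + D)) := by
  simp only [fromBlocks_transpose, fromBlocks_multiply, transpose_mul, transpose_add, hA.eq,
    transpose_transpose, transpose_zero, transpose_one, Matrix.mul_zero, Matrix.zero_mul,
    Matrix.mul_one, Matrix.one_mul, Matrix.add_mul, Matrix.mul_add, Matrix.mul_assoc, add_zero,
    add_assoc, add_left_comm]

variable [DecidableEq m]

theorem det_fromBlocks_add₂₂ [Unique n] (A : Matrix m m S) (B : Matrix m n S) (C : Matrix n m S)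
    (D E : Matrix n n S) :
    (fromBlocks A B C (D + E)).det = (fromBlocks A B C D).det + A.det * E.det := by
  have updateRow_eq (C' : Matrix n m S) (D' : Matrix n n S) :
      (fromBlocks A B C D).updateRow (Sum.inr default) (Sum.elim (C' default) (D' default)) =
        fromBlocks A B C' D' := by
    ext i j
    rcases i with i | i <;> rcases j with j | j <;> simp [updateRow_apply, Unique.eq_default]
  have row_add : Sum.elim (C default) ((D + E) default) =
      Sum.elim (C default) (D default) + Sum.elim ((0 : Matrix n m S) default) (E default) := by
    ext j
    rcases j with j | j <;> simp
  rw [← updateRow_eq C (D + E), row_add, det_updateRow_add, updateRow_eq, updateRow_eq,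
    det_fromBlocks_zero₂₁]

end Blocks

theorem exists_X_sub_C_mul_add_C_eq {A : Type*} [Ring A] (a : A) (p : A[X]) :
    ∃ (q : A[X]) (c : A), (X - C a) * q + C c = p := by
  nontriviality A
  have degree_mod_lt : degree (p %ₘ (X - C a)) < 1 := by
    simpa using degree_modByMonic_lt p (monic_X_sub_C a)
  refine ⟨p /ₘ (X - C a), (p %ₘ (X - C a)).coeff 0, ?_⟩
  rw [← eq_C_of_degree_le_zero (Order.le_of_lt_succ degree_mod_lt), add_comm, modByMonic_add_div]

section Charmatrix

variable {m n R : Type*} [Fintype m] [DecidableEq m] [CommRing R]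

theorem isSymm_of_isSymm_charmatrix {x : Matrix m m R} (hx : (charmatrix x).IsSymm) :
    x.IsSymm := by
  have h := congrArg matPolyEquiv ((charmatrix_transpose x).trans hx)
  rw [matPolyEquiv_charmatrix, matPolyEquiv_charmatrix] at h
  exact C_injective (sub_right_injective h)

theorem charmatrix_neg_eq (x : Matrix m m R) :
    charmatrix (-x) = x.map C + (X : R[X]) • (1 : Matrix m m R[X]) := by
  rw [charmatrix, map_neg, sub_neg_eq_add, add_comm, scalar_apply, ← smul_one_eq_diagonal]
  rfl

theorem exists_charmatrix_mul_add_map_C_eq (x : Matrix m m R) (B : Matrix m n R[X]) :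
    ∃ (Q : Matrix m n R[X]) (b : Matrix m n R), charmatrix x * Q + b.map C = B := by
  have square (P : Matrix m m R[X]) :
      ∃ (Q : Matrix m m R[X]) (c : Matrix m m R), charmatrix x * Q + c.map C = P := by
    obtain ⟨q, c, h⟩ := exists_X_sub_C_mul_add_C_eq x (matPolyEquiv P)
    refine ⟨matPolyEquiv.symm q, c, matPolyEquiv.injective ?_⟩
    simpa [matPolyEquiv_charmatrix] using h
  rcases isEmpty_or_nonempty m with _ | ⟨⟨k⟩⟩
  · exact ⟨0, 0, Subsingleton.elim _ _⟩
  -- Division is available for square matrices only: repeat the `j`-th column of `B`.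
  choose Q c h using fun j => square (of fun i _ => B i j)
  refine ⟨of fun i j => Q j i k, of fun i j => c j i k, ?_⟩
  ext1 i j
  simpa [Matrix.mul_apply] using congrFun₂ (h j) i k

theorem isMonicOfDegree_charpoly [Nontrivial R] (x : Matrix m m R) :
    IsMonicOfDegree x.charpoly (Fintype.card m) :=
  ⟨x.charpoly_natDegree_eq_dim, x.charpoly_monic⟩

theorem det_fromBlocks_charmatrix [Fintype n] [DecidableEq n] [Unique n] (x : Matrix m m R)
    (b : Matrix m n R) (c : Matrix n m R) (D : Matrix n n R[X]) :
    (fromBlocks (charmatrix x) (-b.map C) (-c.map C) D).det =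
      (fromBlocks x b c (0 : Matrix n n R)).charpoly + x.charpoly * (D.det - X) := by
  have det_sub : (D - charmatrix 0).det = D.det - X := by
    simp [det_unique]
  rw [← add_sub_cancel (charmatrix 0) D, det_fromBlocks_add₂₂, ← charmatrix_fromBlocks,
    add_sub_cancel, det_sub, Matrix.charpoly, Matrix.charpoly]

theorem exists_eq_charmatrix_of_isMonicOfDegree_det [Fintype n] [DecidableEq n] [Unique n]
    (x : Matrix m m R) (b : Matrix m n R) (c : Matrix n m R) (D : Matrix n n R[X])
    (hdet : IsMonicOfDegree (fromBlocks (charmatrix x) (-b.map C) (-c.map C) D).det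
      (Fintype.card m + 1)) :
    ∃ d : Matrix n n R, D = charmatrix d := by
  rcases subsingleton_or_nontrivial R with _ | _
  · exact ⟨0, Subsingleton.elim _ _⟩
  let χ := (fromBlocks x b c (0 : Matrix n n R)).charpoly
  have mul_det_eq : x.charpoly * D.det =
      (fromBlocks (charmatrix x) (-b.map C) (-c.map C) D).det + (x.charpoly * X - χ) := by
    rw [det_fromBlocks_charmatrix]
    ring
  have natDegree_lt : (x.charpoly * X - χ).natDegree < Fintype.card m + 1 := by
    refine IsMonicOfDegree.natDegree_sub_lt (Nat.succ_ne_zero _)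
      ((isMonicOfDegree_charpoly x).mul (isMonicOfDegree_X R)) ?_
    simpa using isMonicOfDegree_charpoly (fromBlocks x b c (0 : Matrix n n R))
  obtain ⟨a, ha⟩ : ∃ a, D.det = X + C a := by
    refine isMonicOfDegree_one_iff.mp ((isMonicOfDegree_charpoly x).of_mul_left ?_)
    rw [mul_det_eq]
    exact hdet.add_right natDegree_lt
  refine ⟨of fun _ _ => -a, ?_⟩
  ext1 i j
  simpa [Unique.eq_default] using ha

theorem exists_fromBlocks_congr_eq_charmatrix [Fintype n] [DecidableEq n] [Unique n]
    {g : Matrix (m ⊕ n) (m ⊕ n) R[X]} (hg : g.IsSymm)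
    (hdet : IsMonicOfDegree g.det (Fintype.card m + 1)) {u : Matrix m m R[X]} (hu : u.det = 1)
    {x : Matrix m m R} (hx : uᵀ * g.toBlocks₁₁ * u = charmatrix x) :
    ∃ (v : Matrix m n R[X]) (y : Matrix (m ⊕ n) (m ⊕ n) R),
      (fromBlocks u v 0 1)ᵀ * g * fromBlocks u v 0 1 = charmatrix y := by
  obtain ⟨A, B, D, rfl, hA⟩ : ∃ A B D, g = fromBlocks A B Bᵀ D ∧ A.IsSymm := by
    rw [← fromBlocks_toBlocks g, isSymm_fromBlocks_iff] at hg
    obtain ⟨hA, hBC, -, -⟩ := hg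
    exact ⟨_, _, _, by rw [hBC, fromBlocks_toBlocks], hA⟩
  rw [toBlocks_fromBlocks₁₁] at hx
  obtain ⟨v, b, hb⟩ := exists_charmatrix_mul_add_map_C_eq x (-(uᵀ * B))
  have border_eq : charmatrix x * v + uᵀ * B = -b.map C := by
    rw [← neg_neg (uᵀ * B), ← hb]
    abel
  have congr_eq := transpose_fromBlocks_mul_fromBlocks_mul hA B v D u
  rw [hx, border_eq, transpose_neg, ← transpose_map] at congr_eq
  have det_congr := congrArg det congr_eq
  rw [det_mul, det_mul, det_transpose, det_fromBlocks_zero₂₁, hu, det_one, one_mul, one_mul,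
    mul_one] at det_congr
  rw [det_congr] at hdet
  obtain ⟨d, hd⟩ := exists_eq_charmatrix_of_isMonicOfDegree_det x b bᵀ _ hdet
  exact ⟨u * v, fromBlocks x b bᵀ d, by rw [congr_eq, hd, charmatrix_fromBlocks]⟩

end Charmatrix

/-- Upper triangular matrices with unit diagonal: the changes of basis allowed in the reduction. -/
structure IsUpperUnitriangular {n S : Type*} [LT n] [Zero S] [One S] (u : Matrix n n S) :
    Prop where
  isUpperTriangular : u.IsUpperTriangular
  apply_self (i : n) : u i i = 1

namespace IsUpperUnitriangular

theorem det_eq_one {n S : Type*} [LinearOrder n] [Fintype n] [CommRing S] {u : Matrix n n S}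
    (hu : IsUpperUnitriangular u) : u.det = 1 := by
  rw [det_of_isUpperTriangular hu.isUpperTriangular]
  exact Finset.prod_eq_one fun i _ => hu.apply_self i

theorem reindex_fromBlocks {S : Type*} [Zero S] [One S] {r k : ℕ} {u : Matrix (Fin r) (Fin r) S}
    {w : Matrix (Fin k) (Fin k) S} (hu : IsUpperUnitriangular u) (hw : IsUpperUnitriangular w)
    (v : Matrix (Fin r) (Fin k) S) :
    IsUpperUnitriangular (reindex finSumFinEquiv finSumFinEquiv (fromBlocks u v 0 w)) where
  isUpperTriangular i j hij := by
    cases i using Fin.addCases <;> cases j using Fin.addCases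
    · simpa using hu.isUpperTriangular ((Fin.strictMono_castAdd k).lt_iff_lt.mp hij)
    · exact absurd hij ((Fin.castAdd_lt _ _).trans_le (Fin.le_coe_natAdd _ _)).not_gt
    · simp
    · simpa using hw.isUpperTriangular ((Fin.strictMono_natAdd r).lt_iff_lt.mp hij)
  apply_self i := by
    cases i using Fin.addCases <;> simp [hu.apply_self, hw.apply_self]

protected theorem one {n S : Type*} [Preorder n] [DecidableEq n] [Zero S] [One S] :
    IsUpperUnitriangular (1 : Matrix n n S) :=
  ⟨blockTriangular_one, one_apply_eq⟩

end IsUpperUnitriangular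

theorem exists_isUpperUnitriangular_congr_eq_charmatrix {R : Type*} [CommRing R] {r : ℕ}
    {g : Matrix (Fin r) (Fin r) R[X]} (hg : g.IsSymm)
    (hminors : ∀ (i : ℕ) (h : i + 1 ≤ r),
      IsMonicOfDegree (g.submatrix (Fin.castLE h) (Fin.castLE h)).det (i + 1)) :
    ∃ (u : Matrix (Fin r) (Fin r) R[X]) (x : Matrix (Fin r) (Fin r) R),
      IsUpperUnitriangular u ∧ uᵀ * g * u = charmatrix x := by
  induction r with
  | zero => exact ⟨1, 0, .one, Subsingleton.elim _ _⟩
  | succ r ih =>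
    let e : Fin r ⊕ Fin 1 ≃ Fin (r + 1) := finSumFinEquiv
    obtain ⟨u, x, hu, hx⟩ := ih (hg.submatrix Fin.castSucc) fun i h =>
      hminors i (h.trans r.le_succ)
    have det_monic : IsMonicOfDegree (g.submatrix e e).det (Fintype.card (Fin r) + 1) := by
      rw [det_submatrix_equiv_self, Fintype.card_fin]
      exact hminors r le_rfl
    obtain ⟨v, y, hy⟩ :=
      exists_fromBlocks_congr_eq_charmatrix (hg.submatrix e) det_monic hu.det_eq_one hx
    refine ⟨reindex e e (fromBlocks u v 0 1), reindex e e y, hu.reindex_fromBlocks .one v, ?_⟩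
    rw [charmatrix_reindex, ← hy]
    simp [← submatrix_mul_equiv _ _ _ e.symm]

/-- a symmetric matrix `g` over `R[ϖ]` whose leading principal `i×i` minors are
monic of degree `i` can be reduced, by a unipotent change of basis `u` over `R[ϖ]`, to the
form `x + ϖ·Id` with `x` a symmetric matrix with entries in `R`. -/
theorem symmetric_matrix_reduction_to_linear_pencil
    (R : Type) [CommRing R] (r : ℕ) (hr : 1 ≤ r)
    (g : Matrix (Fin r) (Fin r) (Polynomial R))
    (hsym : g.IsSymm)
    (hminors : ∀ (i : ℕ) (h : i ≤ r), 1 ≤ i →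
      ((g.submatrix (Fin.castLE h) (Fin.castLE h)).det).Monic ∧
      ((g.submatrix (Fin.castLE h) (Fin.castLE h)).det).natDegree = i) :
    ∃ u : Matrix (Fin r) (Fin r) (Polynomial R),
      (∀ i, u i i = 1) ∧ (∀ i j : Fin r, j < i → u i j = 0) ∧
      ∃ x : Matrix (Fin r) (Fin r) R, x.IsSymm ∧
        uᵀ * g * u = x.map Polynomial.C +
          (Polynomial.X : Polynomial R) • (1 : Matrix (Fin r) (Fin r) (Polynomial R)) := by
  obtain ⟨u, x, hu, hx⟩ := exists_isUpperUnitriangular_congr_eq_charmatrix hsym fun i h =>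
    have ⟨monic, natDegree_eq⟩ := hminors (i + 1) h i.succ_pos
    ⟨natDegree_eq, monic⟩
  have x_isSymm : x.IsSymm := by
    apply isSymm_of_isSymm_charmatrix
    rw [← hx, IsSymm]
    simp only [transpose_mul, transpose_transpose, hsym.eq, Matrix.mul_assoc]
  refine ⟨u, hu.apply_self, fun _ _ h => hu.isUpperTriangular h, -x, x_isSymm.neg, ?_⟩
  rw [hx, ← charmatrix_neg_eq, neg_neg]
end

section
/- Let k be an algebraically closed field and n ≥ 1. Let c : GL_n(k) → kˣ be a map such that c(g·h) = c(g)·c(h) for all g, h ∈ GL_n(k), and suppose there exist m ∈ ℕ and a polynomial P in the n² matrix entries with coefficients in k such that c(g)·det(g)^m = P(g) for all g ∈ GL_n(k). Then there exists an integer s such that c(g) = det(g)^s for all g ∈ GL_n(k). -/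
open Matrix

/-!
A homomorphism `c : GL ι k →* kˣ` is trivial on transvections: if `2 ≠ 0`, conjugating by a
dilation of ratio `2` shows that every transvection is a commutator, and if `2 = 0`, every
transvection squares to `1` while `1` is the only square root of `1` in `k`. Dilations of a given
ratio along different axes are conjugate, so Gaussian elimination gives `c g = χ (det g)`, where
`χ u` is the value of `c` on a dilation of ratio `u`. Restricting `P` to dilations exhibits
`u ↦ χ u * u ^ m` as a linear combination of the characters `u ↦ u ^ r`, so it is one of them by
Dedekind's linear independence of characters.
-/

section Characters

open Polynomial

theorem exists_eq_pow_of_forall_eq_eval {G R : Type*} [MulOneClass G] [CommRing R] [IsDomain R]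
    {φ ψ : G →* R} {q : R[X]} (hq : ∀ x, ψ x = q.eval (φ x)) : ∃ r : ℕ, ψ = φ ^ r := by
  by_contra! hψ
  have hspan : (ψ : G → R) ∈
      Submodule.span R ((fun f : G →* R ↦ (f : G → R)) '' Set.range fun r : ℕ ↦ φ ^ r) := by
    have hsum : (ψ : G → R) = ∑ r ∈ q.support, q.coeff r • ((φ ^ r : G →* R) : G → R) := by
      ext x
      simp [hq, eval_eq_sum, Polynomial.sum]
    rw [hsum]
    exact Submodule.sum_smul_mem _ _ fun r _ ↦
      Submodule.subset_span (Set.mem_image_of_mem _ (Set.mem_range_self r))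
  refine (linearIndependent_monoidHom G R).notMem_span_image ?_ hspan
  rintro ⟨r, hr⟩
  exact hψ r hr.symm

theorem exists_eq_zpow_of_forall_mul_pow_eq_eval {R : Type*} [CommRing R] [IsDomain R]
    {χ : Rˣ →* Rˣ} {m : ℕ} {q : R[X]} (hq : ∀ u : Rˣ, (χ u : R) * (u : R) ^ m = q.eval (u : R)) :
    ∃ s : ℤ, ∀ u, χ u = u ^ s := by
  obtain ⟨r, hr⟩ := exists_eq_pow_of_forall_eq_eval (φ := Units.coeHom R)
    (ψ := (Units.coeHom R).comp χ * Units.coeHom R ^ m) hq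
  refine ⟨r - m, fun u ↦ ?_⟩
  have hu : χ u * u ^ m = u ^ r := Units.ext (by simpa using DFunLike.congr_fun hr u)
  rw [_root_.zpow_sub, zpow_natCast, zpow_natCast, ← hu, mul_inv_cancel_right]

end Characters

variable {ι : Type*} [Fintype ι] [DecidableEq ι]

section CommRing

variable {R : Type*} [CommRing R]

/-- The invertible diagonal matrix with diagonal entries `d`, as a homomorphism in `d`. -/
def diagonalGL : (ι → Rˣ) →* GL ι R :=
  (Units.map (diagonalRingHom ι R : (ι → R) →* Matrix ι ι R)).comp
    MulEquiv.piUnits.symm.toMonoidHom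

theorem coe_diagonalGL (d : ι → Rˣ) :
    (diagonalGL d : Matrix ι ι R) = diagonal fun i ↦ (d i : R) := rfl

theorem det_diagonalGL (d : ι → Rˣ) : (diagonalGL d).det = ∏ i, d i := by
  ext
  simp [coe_diagonalGL, det_diagonal]

/-- The dilation of ratio `u` along the `i`-th axis: the diagonal matrix with `i`-th diagonal entry
`u` and all others `1`. As a homomorphism in `u` it is a section of the determinant. -/
def dilationGL (i : ι) : Rˣ →* GL ι R :=
  diagonalGL.comp (MonoidHom.mulSingle (fun _ : ι ↦ Rˣ) i)

theorem coe_dilationGL (i : ι) (u : Rˣ) :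
    (dilationGL i u : Matrix ι ι R) = diagonal (Pi.mulSingle i (u : R)) := by
  refine congrArg diagonal (funext fun j ↦ ?_)
  exact Pi.apply_mulSingle (fun _ ↦ Units.val) (fun _ ↦ Units.val_one) i u j

theorem det_dilationGL (i : ι) (u : Rˣ) : (dilationGL i u).det = u :=
  (det_diagonalGL _).trans (Fintype.prod_pi_mulSingle' i u)

theorem swap_mul_dilationGL (i j : ι) (u : Rˣ) :
    GeneralLinearGroup.swap R i j * dilationGL j u =
      dilationGL i u * GeneralLinearGroup.swap R i j := by
  ext a b
  simp only [Units.val_mul, GeneralLinearGroup.val_swap, Matrix.swap, coe_dilationGL,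
    mul_diagonal, diagonal_mul, PEquiv.toMatrix_apply, Equiv.toPEquiv_apply,
    Equiv.swap_apply_def, Pi.mulSingle_apply, Option.mem_def, Option.some.injEq]
  grind

theorem dilationGL_mul_transvection {i j : ι} (hij : i ≠ j) (u : Rˣ) (x : R) :
    dilationGL i u * (SpecialLinearGroup.transvection hij x : GL ι R) =
      (SpecialLinearGroup.transvection hij (u * x) : GL ι R) * dilationGL i u := by
  ext a b
  simp only [Units.val_mul, coe_dilationGL, SpecialLinearGroup.coe_GL_coe_matrix,
    SpecialLinearGroup.transvection_coe, mul_diagonal, diagonal_mul, Matrix.add_apply,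
    Matrix.one_apply, single_apply, Pi.mulSingle_apply]
  grind

theorem map_diagonalGL_eq_map_dilationGL_prod {A : Type*} [CancelCommMonoid A] (c : GL ι R →* A)
    (i : ι) (d : ι → Rˣ) : c (diagonalGL d) = c (dilationGL i (∏ j, d j)) := by
  have hswap (j : ι) (u : Rˣ) : c (dilationGL j u) = c (dilationGL i u) := by
    have h := congrArg c (swap_mul_dilationGL i j u)
    rw [map_mul, map_mul, mul_comm] at h
    exact mul_right_cancel h
  calc c (diagonalGL d) = c (diagonalGL (∏ j, Pi.mulSingle j (d j))) := by
        rw [Finset.univ_prod_mulSingle]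
    _ = ∏ j, c (dilationGL j (d j)) := map_prod (c.comp diagonalGL) _ _
    _ = ∏ j, c (dilationGL i (d j)) := Finset.prod_congr rfl fun j _ ↦ hswap j (d j)
    _ = c (dilationGL i (∏ j, d j)) := (map_prod (c.comp (dilationGL i)) _ _).symm

theorem map_transvection_eq_one_of_isUnit {A : Type*} [CancelCommMonoid A] (c : GL ι R →* A)
    {i j : ι} (hij : i ≠ j) {u : Rˣ} (hu : IsUnit (u - 1 : R)) (x : R) :
    c (SpecialLinearGroup.transvection hij x) = 1 := by
  obtain ⟨y, rfl⟩ : ∃ y, x = (u - 1 : R) * y := hu.dvd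
  have hconj : c (SpecialLinearGroup.transvection hij y) =
      c (SpecialLinearGroup.transvection hij (u * y)) := by
    have h := congrArg c (dilationGL_mul_transvection hij u y)
    rw [map_mul, map_mul, mul_comm] at h
    exact mul_right_cancel h
  have hadd : c (SpecialLinearGroup.transvection hij (u * y)) =
      c (SpecialLinearGroup.transvection hij ((u - 1 : R) * y)) *
        c (SpecialLinearGroup.transvection hij y) := by
    rw [← map_mul, ← map_mul, ← SpecialLinearGroup.transvection_add, sub_one_mul, sub_add_cancel]
  exact mul_eq_right.mp (hadd.symm.trans hconj.symm)

theorem exists_polynomial_eval_eq_eval_dilationGL (P : MvPolynomial (ι × ι) R) (i : ι) :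
    ∃ q : Polynomial R, ∀ u : Rˣ, q.eval (u : R) =
      MvPolynomial.eval (fun p ↦ (dilationGL i u : Matrix ι ι R) p.1 p.2) P := by
  refine ⟨MvPolynomial.aeval
    (fun p ↦ diagonal (Pi.mulSingle i (Polynomial.X : Polynomial R)) p.1 p.2) P, fun u ↦ ?_⟩
  rw [MvPolynomial.aeval_def, MvPolynomial.polynomial_eval_eval₂, MvPolynomial.eval,
    MvPolynomial.coe_eval₂Hom]
  congr 1
  · ext
    simp
  · ext p
    simp only [coe_dilationGL, diagonal_apply, Pi.mulSingle_apply]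
    split_ifs <;> simp

end CommRing

section Field

variable {k : Type*} [Field k]

theorem map_transvection_eq_one (c : GL ι k →* kˣ) {i j : ι} (hij : i ≠ j) (x : k) :
    c (SpecialLinearGroup.transvection hij x) = 1 := by
  by_cases h2 : (2 : k) = 0
  · have : CharP k 2 := CharTwo.of_one_ne_zero_of_two_eq_zero one_ne_zero h2
    have hsq : c (SpecialLinearGroup.transvection hij x) ^ 2 = 1 := by
      rw [sq, ← map_mul, ← map_mul, ← SpecialLinearGroup.transvection_add,
        CharTwo.add_self_eq_zero, SpecialLinearGroup.transvection_coeff_zero, map_one, map_one]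
    refine Units.ext (CharTwo.sq_inj.mp ?_)
    rw [← Units.val_pow_eq_pow_val, hsq, Units.val_one, one_pow]
  · refine map_transvection_eq_one_of_isUnit c hij (u := Units.mk0 2 h2) ?_ x
    norm_num

theorem monoidHom_generalLinearGroup_ext {M : Type*} [MulOneClass M] {f f' : GL ι k →* M}
    (hdiagonal : ∀ d, f (diagonalGL d) = f' (diagonalGL d))
    (htransvection : ∀ (i j : ι) (hij : i ≠ j) (x : k),
      f (SpecialLinearGroup.transvection hij x) = f' (SpecialLinearGroup.transvection hij x)) :
    f = f' := by
  ext g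
  refine diagonal_transvection_induction_of_det_ne_zero
    (fun N ↦ ∀ h : GL ι k, (h : Matrix ι ι k) = N → f h = f' h) g g.det_ne_zero ?_ ?_ ?_ g rfl
  · intro d hd h hh
    rw [det_diagonal, Finset.prod_ne_zero_iff] at hd
    obtain rfl : h = diagonalGL fun i ↦ Units.mk0 (d i) (hd i (Finset.mem_univ i)) := Units.ext hh
    exact hdiagonal _
  · rintro ⟨i, j, hij, x⟩ h hh
    obtain rfl : h = SpecialLinearGroup.transvection hij x := Units.ext hh
    exact htransvection i j hij x
  · intro M N hM hN hfM hfN h hh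
    obtain rfl : h = GeneralLinearGroup.mkOfDetNeZero M hM *
        GeneralLinearGroup.mkOfDetNeZero N hN := Units.ext hh
    rw [map_mul, map_mul, hfM _ rfl, hfN _ rfl]

theorem map_eq_map_dilationGL_det (c : GL ι k →* kˣ) (i : ι) (g : GL ι k) :
    c g = c (dilationGL i g.det) := by
  suffices c = (c.comp (dilationGL i)).comp GeneralLinearGroup.det from DFunLike.congr_fun this g
  refine monoidHom_generalLinearGroup_ext (fun d ↦ ?_) fun a b hab x ↦ ?_
  · rw [MonoidHom.comp_apply, MonoidHom.comp_apply, det_diagonalGL,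
      map_diagonalGL_eq_map_dilationGL_prod c i]
  · rw [map_transvection_eq_one, MonoidHom.comp_apply, SpecialLinearGroup.coeToGL_det, map_one]

theorem multiplicative_polynomial_character_is_det_power_general (c : GL ι k →* kˣ) (m : ℕ)
    (P : MvPolynomial (ι × ι) k)
    (hpoly : ∀ g : GL ι k, (c g : k) * (g : Matrix ι ι k).det ^ m =
      MvPolynomial.eval (fun p ↦ (g : Matrix ι ι k) p.1 p.2) P) :
    ∃ s : ℤ, ∀ g, c g = g.det ^ s := by
  obtain hι | ⟨⟨i⟩⟩ := isEmpty_or_nonempty ι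
  · exact ⟨0, fun g ↦ by rw [Subsingleton.elim g 1, map_one, map_one, _root_.one_zpow]⟩
  obtain ⟨q, hq⟩ := exists_polynomial_eval_eq_eval_dilationGL P i
  have hχ (u : kˣ) : (c.comp (dilationGL i) u : k) * (u : k) ^ m = q.eval (u : k) := by
    rw [hq, ← hpoly, ← GeneralLinearGroup.val_det_apply, det_dilationGL, MonoidHom.comp_apply]
  obtain ⟨s, hs⟩ := exists_eq_zpow_of_forall_mul_pow_eq_eval hχ
  exact ⟨s, fun g ↦ (map_eq_map_dilationGL_det c i g).trans (hs g.det)⟩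

end Field

/-- a multiplicative map `c : GL_n(k) → kˣ` over an algebraically closed field
which is "polynomial up to a power of the determinant" is an integer power of the
determinant. -/
theorem multiplicative_polynomial_character_is_det_power
    (k : Type) [Field k] [IsAlgClosed k] (n : ℕ) (hn : 1 ≤ n)
    (c : GL (Fin n) k → kˣ)
    (hmul : ∀ g h : GL (Fin n) k, c (g * h) = c g * c h)
    (m : ℕ) (P : MvPolynomial (Fin n × Fin n) k)
    (hpoly : ∀ g : GL (Fin n) k,
      (c g : k) * ((g : Matrix (Fin n) (Fin n) k).det) ^ m =
        MvPolynomial.eval (fun p => (g : Matrix (Fin n) (Fin n) k) p.1 p.2) P) :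
    ∃ s : ℤ, ∀ g : GL (Fin n) k,
      (c g : k) = ((g : Matrix (Fin n) (Fin n) k).det) ^ s := by
  obtain ⟨s, hs⟩ :=
    multiplicative_polynomial_character_is_det_power_general (MonoidHom.mk' c hmul) m P hpoly
  exact ⟨s, fun g ↦ by simpa using congrArg Units.val (hs g)⟩
end

section
/- Assume moreover that k has characteristic ≠ 2. Let r ≥ 2, let a₁,…,a_r ∈ Fˣ, and fix 1 ≤ i ≤ r−1 such that v(a_i) = 1 and v(a_j) = 0 for all j ≠ i (with the convention a₀ = 1). Put t = diag(a₁, a₂/a₁, …, a_r/a_{r−1}) ∈ GL_r(F) and t̄ = diag(a_i/a_{i−1}, a_{i+1}/a_i) ∈ GL₂(F). Let X(t) = {n ∈ N_r(F)/N_r(O) : ᵗn·t·n ∈ M_r(O)} and X(t̄) = {ñ ∈ N₂(F)/N₂(O) : ᵗñ·t̄·ñ ∈ M₂(O)} (both conditions are invariant under right multiplication by integral unipotent matrices). Then there is a bijection X(t) ≅ X(t̄), n ↦ ñ, such that for every (α₂,…,α_r) ∈ (kˣ)^{r−1} one has Σ_{j=2}^{r} α_j·res(n_{j−1,j}) = α_{i+1}·res(ñ_{1,2}),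 where res(f) denotes the coefficient of ϖ^{−1} of a Laurent series f (which, applied to the superdiagonal entries, is well defined on classes modulo N_r(O)). -/
open Matrix

/-- Upper triangular unipotent matrices (the group `N_s`). -/
def IsUnipUT {k : Type} [Field k] {s : ℕ}
    (n : Matrix (Fin s) (Fin s) (LaurentSeries k)) : Prop :=
  (∀ p, n p p = 1) ∧ ∀ p q : Fin s, q < p → n p q = 0

/-- All entries of the matrix lie in `O = k[[ϖ]]`. -/
def IntEntries {k : Type} [Field k] {s : ℕ}
    (M : Matrix (Fin s) (Fin s) (LaurentSeries k)) : Prop :=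
  ∀ p q : Fin s, M p q ∈ Set.range ((↑·) : PowerSeries k → LaurentSeries k)

/-- The condition defining `X(t)` : `n` is upper triangular unipotent and `ᵗn·t·n` is
integral. -/
def XCond {k : Type} [Field k] {s : ℕ}
    (t n : Matrix (Fin s) (Fin s) (LaurentSeries k)) : Prop :=
  IsUnipUT n ∧ IntEntries (nᵀ * t * n)

/-- `n` and `n'` represent the same class in `N_s(F)/N_s(O)`. -/
def NEquiv {k : Type} [Field k] {s : ℕ}
    (n n' : Matrix (Fin s) (Fin s) (LaurentSeries k)) : Prop :=
  IntEntries (n⁻¹ * n')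

/-!
Write `x = n_{i,i+1}`. Comparing the entries of `ᵗn·t·n` row by row shows that the rows of `n` with
index `p ≠ i` are integral: if the rows above contribute integrally, then so does `t_p n_{p,q}`, and
`t_p` is a unit for `p ≠ i, i + 1`. Rows `i` and `i + 1` have to be treated together; they form a
linear system with integral matrix `(u, ux; ux, ux² + w)`, where `u = t_i` and `w = t_{i+1}`, whose
determinant `uw` is a unit. This gives `n_{i+1,q} ∈ O` and `n_{i,q} - x n_{i+1,q} ∈ O`, so `n` is
the elementary matrix `1 + x E_{i,i+1}` times an element of `N_r(O)`. Hence the class of `n` is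
determined by `x` modulo `O`, subject only to the integrality of `(u, ux; ux, ux² + w)`, and the
other superdiagonal entries have residue zero.
-/

section Matrices

lemma transpose_mul_diagonal_mul_apply {m n S : Type*} [Fintype m] [DecidableEq m]
    [CommSemiring S] (M : Matrix m n S) (t : m → S) (p q : n) :
    (Mᵀ * diagonal t * M) p q = ∑ l, M l p * t l * M l q := by
  rw [mul_apply]
  simp only [mul_diagonal, transpose_apply]

lemma transvection_apply_same {ι K : Type*} [DecidableEq ι] [CommRing K] {a b : ι} (hab : a ≠ b)
    (x : K) : transvection a b x a b = x := by
  simp [transvection, hab]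

variable {ι K : Type*} [Fintype ι] [DecidableEq ι] [CommRing K] {R : Subring K}

lemma inv_mem_matrix {M : Matrix ι ι K} (hM : M ∈ R.matrix) (hdet : M.det = 1) :
    M⁻¹ ∈ R.matrix := by
  let M' : Matrix ι ι R := of fun p q => ⟨M p q, hM p q⟩
  have hM' : M = R.subtype.mapMatrix M' := rfl
  rw [inv_def, hdet, Ring.inverse_one, one_smul, hM', ← RingHom.map_adjugate]
  exact fun p q => (M'.adjugate p q).2

lemma transvection_mem_matrix_iff {a b : ι} (hab : a ≠ b) {x : K} :
    transvection a b x ∈ R.matrix ↔ x ∈ R := by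
  constructor
  · intro h
    exact transvection_apply_same hab x ▸ h a b
  · intro hx
    refine R.matrix.add_mem R.matrix.one_mem fun p q => ?_
    rw [single_apply]
    split_ifs
    exacts [hx, R.zero_mem]

end Matrices

lemma sum_mem_of_add_mem {ι M σ : Type*} [AddCommMonoid M] [SetLike σ M]
    [AddSubmonoidClass σ M] {S : σ} {s : Finset ι} {f : ι → M} {a b : ι} (hab : a ≠ b)
    (ha : a ∈ s) (hb : b ∈ s) (hpair : f a + f b ∈ S)
    (hrest : ∀ l ∈ s, l ≠ a → l ≠ b → f l ∈ S) : ∑ l ∈ s, f l ∈ S := by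
  classical
  have hsub : {a, b} ⊆ s := by simp [Finset.insert_subset_iff, ha, hb]
  rw [← Finset.sum_sdiff hsub, Finset.sum_pair hab]
  refine add_mem (sum_mem fun l hl => ?_) hpair
  simp only [Finset.mem_sdiff, Finset.mem_insert, Finset.mem_singleton, not_or] at hl
  exact hrest l hl.1 hl.2.1 hl.2.2

lemma sum_lt_of_covBy {ι M : Type*} [Fintype ι] [LinearOrder ι] [AddCommMonoid M] {a b : ι}
    (hab : a ⋖ b) (f : ι → M) : ∑ l with l < b, f l = (∑ l with l < a, f l) + f a := by
  have hset : ({l | l < b} : Finset ι) = insert a ({l | l < a} : Finset ι) := by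
    ext l
    simp [hab.lt_iff_le_left, le_iff_eq_or_lt]
  rw [hset, Finset.sum_insert (by simp), add_comm]

/-- Integrality of `ᵗñ·diag(u, w)·ñ = (u, ux; ux, ux² + w)` for `ñ = (1, x; 0, 1)`, that is, the
condition defining `X(t̄)`. -/
structure PairIntegral {K : Type*} [CommRing K] (R : Subring K) (u w x : K) : Prop where
  left_mem : u ∈ R
  mul_mem : u * x ∈ R
  add_mem : u * x ^ 2 + w ∈ R

namespace PairIntegral

lemma gram_mem {K : Type*} [CommRing K] {R : Subring K} {u w x c₁ c₂ d₁ d₂ : K}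
    (h : PairIntegral R u w x) (hc₁ : c₁ ∈ R) (hc₂ : c₂ ∈ R) (hd₁ : d₁ ∈ R) (hd₂ : d₂ ∈ R) :
    (c₁ + x * c₂) * u * (d₁ + x * d₂) + c₂ * w * d₂ ∈ R := by
  have expand : (c₁ + x * c₂) * u * (d₁ + x * d₂) + c₂ * w * d₂ =
      u * (c₁ * d₁) + u * x * (c₁ * d₂ + c₂ * d₁) + (u * x ^ 2 + w) * (c₂ * d₂) := by ring
  rw [expand]
  exact R.add_mem (R.add_mem (R.mul_mem h.left_mem (R.mul_mem hc₁ hd₁))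
    (R.mul_mem h.mul_mem (R.add_mem (R.mul_mem hc₁ hd₂) (R.mul_mem hc₂ hd₁))))
    (R.mul_mem h.add_mem (R.mul_mem hc₂ hd₂))

variable {K : Type*} [Field K] {R : Subring K} {u w x y z : K}

-- Cramer's rule: `(y - x z, z)` is mapped to the given integral vector by the integral matrix
-- `(u, ux; ux, ux² + w)`, whose determinant is `u w`.
lemma mem_and_sub_mem (h : PairIntegral R u w x) (hne : u * w ≠ 0) (hinv : (u * w)⁻¹ ∈ R)
    (h₁ : u * y ∈ R) (h₂ : x * u * y + w * z ∈ R) : z ∈ R ∧ y - x * z ∈ R := by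
  have cancel {v : K} (hv : u * w * v ∈ R) : v ∈ R := by
    simpa only [inv_mul_cancel_left₀ hne] using R.mul_mem hinv hv
  constructor
  · have hz : u * w * z = u * (x * u * y + w * z) - u * x * (u * y) := by ring
    exact cancel (hz ▸ R.sub_mem (R.mul_mem h.left_mem h₂) (R.mul_mem h.mul_mem h₁))
  · have hyz : u * w * (y - x * z) =
        (u * x ^ 2 + w) * (u * y) - u * x * (x * u * y + w * z) := by ring
    exact cancel (hyz ▸ R.sub_mem (R.mul_mem h.add_mem h₁) (R.mul_mem h.mul_mem h₂))

end PairIntegral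

/-- The condition `XCond (diagonal t) n` over an arbitrary subring `R` of a commutative ring: `n` is
upper triangular unipotent and `ᵗn·diag(t)·n` has entries in `R`. -/
structure IsGramIntegral {ι K : Type*} [Fintype ι] [LinearOrder ι] [CommRing K] (R : Subring K)
    (t : ι → K) (n : Matrix ι ι K) : Prop where
  diag_eq_one : ∀ p, n p p = 1
  isUpperTriangular : n.IsUpperTriangular
  mem_matrix : nᵀ * diagonal t * n ∈ R.matrix

/-- The shape of `t` in the reduction to rank two: the entries `t l` are units of `R` except at two
consecutive indices `a` and `b`, where only the product `t a * t b` is controlled. -/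
structure IsUnitOutsidePair {ι K : Type*} [LinearOrder ι] [Field K] (R : Subring K)
    (t : ι → K) (a b : ι) : Prop where
  covBy : a ⋖ b
  ne_zero : ∀ l, t l ≠ 0
  mem : ∀ l, l ≠ a → l ≠ b → t l ∈ R
  inv_mem : ∀ l, l ≠ a → l ≠ b → (t l)⁻¹ ∈ R
  mul_inv_mem : (t a * t b)⁻¹ ∈ R

namespace IsGramIntegral

section CommRing

variable {ι K : Type*} [Fintype ι] [LinearOrder ι] [CommRing K] {R : Subring K} {t : ι → K}
  {n : Matrix ι ι K}

lemma det_eq_one (h : IsGramIntegral R t n) : n.det = 1 := by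
  rw [det_of_isUpperTriangular h.isUpperTriangular]
  exact Finset.prod_eq_one fun p _ => h.diag_eq_one p

lemma sum_lt_add_mem (h : IsGramIntegral R t n) (p q : ι) :
    (∑ l with l < p, n l p * t l * n l q) + t p * n p q ∈ R := by
  have hentry := h.mem_matrix p q
  have hvanish : ∑ l with ¬ l < p, n l p * t l * n l q = t p * n p q := by
    rw [Finset.sum_eq_single p]
    · rw [h.diag_eq_one, one_mul]
    · intro l hl hlp
      have hpl : p < l := (not_lt.mp (Finset.mem_filter.mp hl).2).lt_of_ne' hlp
      rw [h.isUpperTriangular hpl, zero_mul, zero_mul]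
    · simp
  rwa [transpose_mul_diagonal_mul_apply, ← Finset.sum_filter_add_sum_filter_not _ (· < p),
    hvanish] at hentry

end CommRing

variable {ι K : Type*} [Fintype ι] [LinearOrder ι] [Field K] {R : Subring K} {t : ι → K}
  {a b : ι} {n n' : Matrix ι ι K}

lemma row_mem_of_sum_lt_mem (h : IsGramIntegral R t n) {p q : ι} (hp : t p ≠ 0)
    (hinv : (t p)⁻¹ ∈ R) (hsum : ∑ l with l < p, n l p * t l * n l q ∈ R) : n p q ∈ R := by
  have htn : t p * n p q ∈ R := (R.add_mem_cancel_left hsum).mp (h.sum_lt_add_mem p q)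
  simpa only [inv_mul_cancel_left₀ hp] using R.mul_mem hinv htn

lemma row_mem_of_lt_left (ht : IsUnitOutsidePair R t a b) (h : IsGramIntegral R t n) (p : ι)
    (hp : p < a) (q : ι) : n p q ∈ R := by
  induction p using WellFoundedLT.induction generalizing q with
  | ind p ih =>
    have hunit (l : ι) (hl : l < a) : l ≠ a ∧ l ≠ b := ⟨hl.ne, (hl.trans ht.covBy.lt).ne⟩
    refine h.row_mem_of_sum_lt_mem (ht.ne_zero p)
      (ht.inv_mem p (hunit p hp).1 (hunit p hp).2) (R.sum_mem fun l hl => ?_)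
    have hlp : l < p := (Finset.mem_filter.mp hl).2
    have hla := hlp.trans hp
    exact R.mul_mem (R.mul_mem (ih l hlp hla p) (ht.mem l (hunit l hla).1 (hunit l hla).2))
      (ih l hlp hla q)

lemma sum_lt_left_mem (ht : IsUnitOutsidePair R t a b) (h : IsGramIntegral R t n) (p q : ι) :
    ∑ l with l < a, n l p * t l * n l q ∈ R := by
  refine R.sum_mem fun l hl => ?_
  have hla : l < a := (Finset.mem_filter.mp hl).2
  exact R.mul_mem (R.mul_mem (h.row_mem_of_lt_left ht l hla p)
    (ht.mem l hla.ne (hla.trans ht.covBy.lt).ne)) (h.row_mem_of_lt_left ht l hla q)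

lemma left_mul_mem (ht : IsUnitOutsidePair R t a b) (h : IsGramIntegral R t n) (q : ι) :
    t a * n a q ∈ R :=
  (R.add_mem_cancel_left (h.sum_lt_left_mem ht a q)).mp (h.sum_lt_add_mem a q)

lemma right_add_mem (ht : IsUnitOutsidePair R t a b) (h : IsGramIntegral R t n) (q : ι) :
    n a b * t a * n a q + t b * n b q ∈ R := by
  have hsum := h.sum_lt_add_mem b q
  rw [sum_lt_of_covBy ht.covBy, add_assoc] at hsum
  exact (R.add_mem_cancel_left (h.sum_lt_left_mem ht b q)).mp hsum

theorem pairIntegral (ht : IsUnitOutsidePair R t a b) (h : IsGramIntegral R t n) :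
    PairIntegral R (t a) (t b) (n a b) where
  left_mem := by simpa only [h.diag_eq_one, mul_one] using h.left_mul_mem ht a
  mul_mem := h.left_mul_mem ht b
  add_mem := by
    have hright := h.right_add_mem ht b
    rw [h.diag_eq_one, mul_one] at hright
    convert hright using 1
    ring

lemma pair_rows_mem (ht : IsUnitOutsidePair R t a b) (h : IsGramIntegral R t n) (q : ι) :
    n b q ∈ R ∧ n a q - n a b * n b q ∈ R :=
  (h.pairIntegral ht).mem_and_sub_mem (mul_ne_zero (ht.ne_zero a) (ht.ne_zero b)) ht.mul_inv_mem
    (h.left_mul_mem ht q) (h.right_add_mem ht q)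

lemma pair_gram_mem (ht : IsUnitOutsidePair R t a b) (h : IsGramIntegral R t n) (p q : ι) :
    n a p * t a * n a q + n b p * t b * n b q ∈ R := by
  obtain ⟨hbp, hap⟩ := h.pair_rows_mem ht p
  obtain ⟨hbq, haq⟩ := h.pair_rows_mem ht q
  simpa only [sub_add_cancel] using (h.pairIntegral ht).gram_mem hap hbp haq hbq

theorem row_mem_of_ne (ht : IsUnitOutsidePair R t a b) (h : IsGramIntegral R t n) (p : ι)
    (hp : p ≠ a) (q : ι) : n p q ∈ R := by
  induction p using WellFoundedLT.induction generalizing q with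
  | ind p ih =>
    rcases hp.lt_or_gt with hpa | hap
    · exact h.row_mem_of_lt_left ht p hpa q
    rcases (ht.covBy.ge_of_gt hap).eq_or_lt with rfl | hbp
    · exact (h.pair_rows_mem ht q).1
    refine h.row_mem_of_sum_lt_mem (ht.ne_zero p) (ht.inv_mem p hp hbp.ne')
      (sum_mem_of_add_mem ht.covBy.ne (by simpa using hap) (by simpa using hbp)
        (h.pair_gram_mem ht p q) fun l hl hla hlb => ?_)
    have hlp : l < p := (Finset.mem_filter.mp hl).2
    exact R.mul_mem (R.mul_mem (ih l hlp hla p) (ht.mem l hla hlb)) (ih l hlp hla q)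

theorem transvection_neg_mul_mem_matrix (ht : IsUnitOutsidePair R t a b)
    (h : IsGramIntegral R t n) : transvection a b (-n a b) * n ∈ R.matrix := by
  intro p q
  rcases eq_or_ne p a with rfl | hp
  · rw [transvection_mul_apply_same, neg_mul, ← sub_eq_add_neg]
    exact (h.pair_rows_mem ht q).2
  · rw [transvection_mul_apply_of_ne _ _ _ _ hp]
    exact h.row_mem_of_ne ht p hp q

lemma det_transvection_neg_mul (ht : IsUnitOutsidePair R t a b) (h : IsGramIntegral R t n) :
    (transvection a b (-n a b) * n).det = 1 := by
  rw [det_mul, det_transvection_of_ne _ _ ht.covBy.ne, h.det_eq_one, one_mul]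

theorem inv_mul_mem_matrix_iff (ht : IsUnitOutsidePair R t a b) (h : IsGramIntegral R t n)
    (h' : IsGramIntegral R t n') : n⁻¹ * n' ∈ R.matrix ↔ n' a b - n a b ∈ R := by
  set c := transvection a b (-n a b) * n with hc
  set c' := transvection a b (-n' a b) * n' with hc'
  have c_mem : c ∈ R.matrix := h.transvection_neg_mul_mem_matrix ht
  have c'_mem : c' ∈ R.matrix := h'.transvection_neg_mul_mem_matrix ht
  have c_det : c.det = 1 := h.det_transvection_neg_mul ht
  have c'_det : c'.det = 1 := h'.det_transvection_neg_mul ht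
  have hquot : c * (n⁻¹ * n') = transvection a b (n' a b - n a b) * c' := by
    rw [hc, hc', Matrix.mul_assoc, mul_nonsing_inv_cancel_left _ _ (by simp [h.det_eq_one]),
      ← Matrix.mul_assoc, transvection_mul_transvection_same _ _ ht.covBy.ne]
    congr 2
    ring
  rw [← transvection_mem_matrix_iff ht.covBy.ne]
  constructor
  · intro hn
    have hmul := R.matrix.mul_mem (R.matrix.mul_mem c_mem hn) (inv_mem_matrix c'_mem c'_det)
    rwa [hquot, mul_nonsing_inv_cancel_right _ _ (by simp [c'_det])] at hmul
  · intro hx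
    have hmul := R.matrix.mul_mem (inv_mem_matrix c_mem c_det) (R.matrix.mul_mem hx c'_mem)
    rwa [← hquot, nonsing_inv_mul_cancel_left _ _ (by simp [c_det])] at hmul

end IsGramIntegral

lemma isGramIntegral_transvection {ι K : Type*} [Fintype ι] [LinearOrder ι] [CommRing K]
    {R : Subring K} {t : ι → K} {a b : ι} {x : K} (hab : a < b)
    (ht : ∀ l, l ≠ a → l ≠ b → t l ∈ R) (hx : PairIntegral R (t a) (t b) x) :
    IsGramIntegral R t (transvection a b x) where
  diag_eq_one p := by
    have hne : ¬(a = p ∧ b = p) := fun h => hab.ne (h.1.trans h.2.symm)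
    simp [transvection, hne]
  isUpperTriangular := blockTriangular_transvection hab.le x
  mem_matrix p q := by
    have hone (l q : ι) : (1 : Matrix ι ι K) l q ∈ R := R.matrix.one_mem l q
    have hrow (q : ι) :
        transvection a b x a q = (1 : Matrix ι ι K) a q + x * (1 : Matrix ι ι K) b q := by
      rw [← transvection_mul_apply_same, Matrix.mul_one]
    have hrow_ne (l q : ι) (hl : l ≠ a) : transvection a b x l q = (1 : Matrix ι ι K) l q := by
      rw [← transvection_mul_apply_of_ne a b l q hl x 1, Matrix.mul_one]
    rw [transpose_mul_diagonal_mul_apply]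
    refine sum_mem_of_add_mem hab.ne (Finset.mem_univ a) (Finset.mem_univ b) ?_
      fun l _ hla hlb => ?_
    · rw [hrow, hrow, hrow_ne b _ hab.ne', hrow_ne b _ hab.ne']
      exact hx.gram_mem (hone a p) (hone b p) (hone a q) (hone b q)
    · rw [hrow_ne l _ hla, hrow_ne l _ hla]
      exact R.mul_mem (R.mul_mem (hone l p) (ht l hla hlb)) (hone l q)

lemma IsUnitOutsidePair.fin_two {ι K : Type*} [LinearOrder ι] [Field K] {R : Subring K}
    {t : ι → K} {a b : ι} (ht : IsUnitOutsidePair R t a b) {t' : Fin 2 → K} (h0 : t' 0 = t a)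
    (h1 : t' 1 = t b) : IsUnitOutsidePair R t' 0 1 where
  covBy := Fin.covBy_iff.mpr (Nat.covBy_iff_add_one_eq.mpr rfl)
  ne_zero := Fin.forall_fin_two.mpr ⟨h0 ▸ ht.ne_zero a, h1 ▸ ht.ne_zero b⟩
  mem l hl0 hl1 := by omega
  inv_mem l hl0 hl1 := by omega
  mul_inv_mem := by simpa only [h0, h1] using ht.mul_inv_mem

lemma isUnitOutsidePair_div {K : Type*} [Field K] {R : Subring K} {r i : ℕ} {a : ℕ → K}
    (hi : 1 ≤ i) (hir : i < r) (hne : ∀ j ≤ r, a j ≠ 0) (hmem : ∀ j ≤ r, j ≠ i → a j ∈ R)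
    (hinv : ∀ j ≤ r, j ≠ i → (a j)⁻¹ ∈ R) :
    IsUnitOutsidePair R (fun l : Fin r => a (l + 1) / a l) ⟨i - 1, by omega⟩ ⟨i, hir⟩ where
  covBy := by simp only [Fin.covBy_iff, Nat.covBy_iff_add_one_eq]; omega
  ne_zero l := div_ne_zero (hne _ l.2) (hne _ l.2.le)
  mem l hla hlb := by
    simp only [ne_eq, Fin.ext_iff] at hla hlb
    exact div_eq_mul_inv (a (l + 1)) (a l) ▸
      R.mul_mem (hmem _ l.2 (by omega)) (hinv _ l.2.le hlb)
  inv_mem l hla hlb := by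
    simp only [ne_eq, Fin.ext_iff] at hla hlb
    rw [inv_div, div_eq_mul_inv]
    exact R.mul_mem (hmem _ l.2.le hlb) (hinv _ l.2 (by omega))
  mul_inv_mem := by
    simp only [Nat.sub_add_cancel hi]
    rw [mul_comm, div_mul_div_cancel₀ (hne i hir.le), inv_div, div_eq_mul_inv]
    exact R.mul_mem (hmem _ (by omega) (by omega)) (hinv _ hir (by omega))

section LaurentIntegers

variable (k : Type*) [Field k]

/-- The ring `O = k[[ϖ]]`, viewed as a subring of `F = k((ϖ))`. -/
noncomputable abbrev laurentIntegers : Subring (LaurentSeries k) :=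
  (HahnSeries.ofPowerSeries ℤ k).range

variable {k}

lemma hahnSeries_order_inv {Γ R : Type*} [AddCommGroup Γ] [LinearOrder Γ] [IsOrderedAddMonoid Γ]
    [Field R] (x : HahnSeries Γ R) : x⁻¹.order = -x.order := by
  rcases eq_or_ne x 0 with rfl | hx
  · simp
  · rw [eq_neg_iff_add_eq_zero, ← HahnSeries.order_mul (inv_ne_zero hx) hx, inv_mul_cancel₀ hx,
      HahnSeries.order_one]

lemma mem_laurentIntegers_of_order_nonneg {x : LaurentSeries k} (hx : 0 ≤ x.order) :
    x ∈ laurentIntegers k :=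
  ⟨PowerSeries.X ^ x.order.toNat * x.powerSeriesPart, by
    simpa using LaurentSeries.X_order_mul_powerSeriesPart (Int.toNat_of_nonneg hx)⟩

lemma inv_mem_laurentIntegers_of_order_nonpos {x : LaurentSeries k} (hx : x.order ≤ 0) :
    x⁻¹ ∈ laurentIntegers k :=
  mem_laurentIntegers_of_order_nonneg (by rw [hahnSeries_order_inv]; omega)

lemma coeff_neg_one_of_mem_laurentIntegers {x : LaurentSeries k} (hx : x ∈ laurentIntegers k) :
    x.coeff (-1) = 0 := by
  obtain ⟨f, rfl⟩ := hx
  simp [PowerSeries.coeff_coe]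

end LaurentIntegers

section RankTwo

variable {k : Type} [Field k] {r s : ℕ}

lemma xCond_diagonal_iff {t : Fin s → LaurentSeries k}
    {n : Matrix (Fin s) (Fin s) (LaurentSeries k)} :
    XCond (diagonal t) n ↔ IsGramIntegral (laurentIntegers k) t n :=
  ⟨fun h => ⟨h.1.1, fun _ _ hlt => h.1.2 _ _ hlt, h.2⟩,
    fun h => ⟨⟨h.diag_eq_one, fun _ _ hlt => h.isUpperTriangular hlt⟩, h.mem_matrix⟩⟩

theorem nEquiv_iff_sub_mem {t : Fin s → LaurentSeries k} {a b : Fin s}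
    (ht : IsUnitOutsidePair (laurentIntegers k) t a b)
    {n n' : Matrix (Fin s) (Fin s) (LaurentSeries k)} (h : XCond (diagonal t) n)
    (h' : XCond (diagonal t) n') : NEquiv n n' ↔ n' a b - n a b ∈ laurentIntegers k :=
  (xCond_diagonal_iff.mp h).inv_mul_mem_matrix_iff ht (xCond_diagonal_iff.mp h')

lemma XCond.transvection {t : Fin r → LaurentSeries k} {t' : Fin s → LaurentSeries k}
    {a b : Fin r} {a' b' : Fin s} (ht : IsUnitOutsidePair (laurentIntegers k) t a b)
    (ht' : IsUnitOutsidePair (laurentIntegers k) t' a' b') (ha : t' a' = t a) (hb : t' b' = t b)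
    {n : Matrix (Fin r) (Fin r) (LaurentSeries k)} (h : XCond (diagonal t) n) :
    XCond (diagonal t') (Matrix.transvection a' b' (n a b)) :=
  xCond_diagonal_iff.mpr <| isGramIntegral_transvection ht'.covBy.lt ht'.mem <|
    ha ▸ hb ▸ (xCond_diagonal_iff.mp h).pairIntegral ht

theorem exists_bijection_of_pair_eq {t : Fin r → LaurentSeries k} {t' : Fin s → LaurentSeries k}
    {a b : Fin r} {a' b' : Fin s} (ht : IsUnitOutsidePair (laurentIntegers k) t a b)
    (ht' : IsUnitOutsidePair (laurentIntegers k) t' a' b') (ha : t' a' = t a)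
    (hb : t' b' = t b) :
    ∃ Φ : {n // XCond (diagonal t) n} → {m // XCond (diagonal t') m},
      (∀ n n', NEquiv n.1 n'.1 ↔ NEquiv (Φ n).1 (Φ n').1) ∧
      (∀ m : {m // XCond (diagonal t') m}, ∃ n, NEquiv (Φ n).1 m.1) ∧
      ∀ n, (Φ n).1 a' b' = n.1 a b := by
  let Φ (n : {n // XCond (diagonal t) n}) : {m // XCond (diagonal t') m} :=
    ⟨transvection a' b' (n.1 a b), n.2.transvection ht ht' ha hb⟩
  have hΦ (n) : (Φ n).1 a' b' = n.1 a b := transvection_apply_same ht'.covBy.ne _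
  refine ⟨Φ, fun n n' => ?_, fun m => ?_, hΦ⟩
  · rw [nEquiv_iff_sub_mem ht n.2 n'.2, nEquiv_iff_sub_mem ht' (Φ n).2 (Φ n').2, hΦ, hΦ]
  · let n : {n // XCond (diagonal t) n} :=
      ⟨transvection a b (m.1 a' b'), m.2.transvection ht' ht ha.symm hb.symm⟩
    have hn : n.1 a b = m.1 a' b' := transvection_apply_same ht.covBy.ne _
    refine ⟨n, ?_⟩
    rw [nEquiv_iff_sub_mem ht' (Φ n).2 m.2, hΦ, hn, sub_self]
    exact zero_mem _

lemma sum_mul_residue_superdiagonal {i : ℕ} (hi : 1 ≤ i) (hir : i < r)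
    {n : Matrix (Fin r) (Fin r) (LaurentSeries k)}
    (hn : ∀ p ≠ ⟨i - 1, by omega⟩, ∀ q, n p q ∈ laurentIntegers k) (α : Fin (r - 1) → k) :
    ∑ j : Fin (r - 1), α j * (n ⟨j, by omega⟩ ⟨j + 1, by omega⟩).coeff (-1) =
      α ⟨i - 1, by omega⟩ * (n ⟨i - 1, by omega⟩ ⟨i, hir⟩).coeff (-1) := by
  rw [Finset.sum_eq_single ⟨i - 1, by omega⟩]
  · simp only [Nat.sub_add_cancel hi]
  · intro j _ hj
    rw [coeff_neg_one_of_mem_laurentIntegers (hn _ (by simpa [Fin.ext_iff] using hj) _), mul_zero]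
  · simp

end RankTwo

theorem reduction_to_rank_two_general
    (k : Type) [Field k] (r : ℕ) (a : ℕ → LaurentSeries k) (hane : ∀ j : ℕ, j ≤ r → a j ≠ 0)
    (i : ℕ) (hi1 : 1 ≤ i) (hir : i < r)
    (hvj : ∀ j : ℕ, j ≤ r → j ≠ i → (a j).order = 0) :
    let t : Matrix (Fin r) (Fin r) (LaurentSeries k) :=
      Matrix.diagonal fun l => a (l.val + 1) / a l.val
    let t2 : Matrix (Fin 2) (Fin 2) (LaurentSeries k) :=
      Matrix.diagonal fun l => if l = 0 then a i / a (i - 1) else a (i + 1) / a i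
    ∃ Φ : {n : Matrix (Fin r) (Fin r) (LaurentSeries k) // XCond t n} →
          {m : Matrix (Fin 2) (Fin 2) (LaurentSeries k) // XCond t2 m},
      (∀ n n', NEquiv n.1 n'.1 ↔ NEquiv (Φ n).1 (Φ n').1) ∧
      (∀ m : {m : Matrix (Fin 2) (Fin 2) (LaurentSeries k) // XCond t2 m},
        ∃ n, NEquiv (Φ n).1 m.1) ∧
      (∀ n, ∀ α : Fin (r - 1) → k,
        (∑ j : Fin (r - 1), α j * (n.1 ⟨j, by omega⟩ ⟨j + 1, by omega⟩).coeff (-1)) =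
          α ⟨i - 1, by omega⟩ * ((Φ n).1 0 1).coeff (-1)) := by
  intro t t2
  have ht := isUnitOutsidePair_div (R := laurentIntegers k) hi1 hir hane
    (fun j hj hji => mem_laurentIntegers_of_order_nonneg (hvj j hj hji).ge)
    (fun j hj hji => inv_mem_laurentIntegers_of_order_nonpos (hvj j hj hji).le)
  let τ : Fin 2 → LaurentSeries k := fun l => if l = 0 then a i / a (i - 1) else a (i + 1) / a i
  have h0 : τ 0 = a (i - 1 + 1) / a (i - 1) := by simp [τ, Nat.sub_add_cancel hi1]
  have h1 : τ 1 = a (i + 1) / a i := by simp [τ]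
  obtain ⟨Φ, hequiv, hsurj, hentry⟩ := exists_bijection_of_pair_eq ht (ht.fin_two h0 h1) h0 h1
  refine ⟨Φ, hequiv, hsurj, fun n α => ?_⟩
  rw [hentry]
  exact sum_mul_residue_superdiagonal hi1 hir ((xCond_diagonal_iff.mp n.2).row_mem_of_ne ht) α

/-- for `t = diag(a₁, a₂/a₁, …, a_r/a_{r−1})` with `v(a_i) = 1` and `v(a_j) = 0`
for `j ≠ i`, there is a bijection `X(t) ≅ X(t̄)`, `n ↦ ñ`, with
`t̄ = diag(a_i/a_{i−1}, a_{i+1}/a_i)`, compatible with the residues of the superdiagonal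
entries : `Σ_{j=2}^{r} α_j·res(n_{j−1,j}) = α_{i+1}·res(ñ_{1,2})`. -/
theorem reduction_to_rank_two
    (k : Type) [Field k] (hchar : ringChar k ≠ 2)
    (r : ℕ) (hr : 2 ≤ r)
    (a : ℕ → LaurentSeries k) (ha0 : a 0 = 1)
    (hane : ∀ j : ℕ, j ≤ r → a j ≠ 0)
    (i : ℕ) (hi1 : 1 ≤ i) (hi2 : i ≤ r - 1)
    (hvi : (a i).order = 1)
    (hvj : ∀ j : ℕ, j ≤ r → j ≠ i → (a j).order = 0) :
    -- `t = diag (a₁, a₂/a₁, …, a_r/a_{r-1})`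
    let t : Matrix (Fin r) (Fin r) (LaurentSeries k) :=
      Matrix.diagonal fun l => a (l.val + 1) / a l.val
    -- `t̄ = diag (a_i/a_{i−1}, a_{i+1}/a_i)`
    let t2 : Matrix (Fin 2) (Fin 2) (LaurentSeries k) :=
      Matrix.diagonal fun l => if l = 0 then a i / a (i - 1) else a (i + 1) / a i
    ∃ Φ : {n : Matrix (Fin r) (Fin r) (LaurentSeries k) // XCond t n} →
          {m : Matrix (Fin 2) (Fin 2) (LaurentSeries k) // XCond t2 m},
      -- `Φ` descends to a bijection between the quotients `X(t)` and `X(t̄)` :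
      (∀ n n', NEquiv n.1 n'.1 ↔ NEquiv (Φ n).1 (Φ n').1) ∧
      (∀ m : {m : Matrix (Fin 2) (Fin 2) (LaurentSeries k) // XCond t2 m},
        ∃ n, NEquiv (Φ n).1 m.1) ∧
      -- compatibility of the residues of the superdiagonal entries :
      (∀ n, ∀ α : Fin (r - 1) → k, (∀ j, α j ≠ 0) →
        (∑ j : Fin (r - 1),
            α j * (n.1 ⟨j.1, by have := j.2; omega⟩ ⟨j.1 + 1, by have := j.2; omega⟩).coeff
              (-1)) =
          α ⟨i - 1, by omega⟩ * ((Φ n).1 0 1).coeff (-1)) := by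
  obtain ⟨Φ, hequiv, hsurj, hres⟩ :=
    reduction_to_rank_two_general k r a hane i hi1 (by omega) hvj
  exact ⟨Φ, hequiv, hsurj, fun n α _ => hres n α⟩
end
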